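/- Let (f_λ)_{λ∈𝔻^n} be a holomorphic family of rational maps of the Riemann sphere of degree d ≥ 2 which is weakly stable. Then the holomorphic motion is well defined at every point p_0 of the closure J*_0 of the set of periodic points of f_0: for every sequence (p_0^n)_n of periodic points of f_0 converging to p_0, the sequence of holomorphic maps (λ ↦ p^n_λ)_n converges. -/

import Mathlib

open Filter Topology Polynomial Set OnePoint
open scoped Classical

noncomputable section

/-- The Riemann sphere, as the one-point compactification of `ℂ`. -/
abbrev Sphere := OnePoint ℂ

/-- The finite part of a point of the sphere (junk value `0` at `∞`). -/
def toC : Sphere → ℂ := Function.extend (fun z : ℂ => (z : Sphere)) id fun _ => 0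

/-- The inversion `z ↦ 1/z` of the Riemann sphere. -/
def sphInv : Sphere → Sphere := fun x =>
  if x = ((0 : ℂ) : Sphere) then ∞
  else if x = ∞ then ((0 : ℂ) : Sphere)
  else (((toC x)⁻¹ : ℂ) : Sphere)

/-- The rational map on the Riemann sphere induced by a pair of polynomials `p/q`. -/
def ratEval (p q : ℂ[X]) : Sphere → Sphere := fun x =>
  if x = ∞ then
    (if q.degree < p.degree then ∞
     else if p.degree < q.degree then ((0 : ℂ) : Sphere)
     else ((p.leadingCoeff / q.leadingCoeff : ℂ) : Sphere))
  else
    (if q.eval (toC x) = 0 then ∞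
     else ((p.eval (toC x) / q.eval (toC x) : ℂ) : Sphere))

/-- A rational map of degree `d`, given by a pair of coprime polynomials. -/
structure RatMap (d : ℕ) where
  p : ℂ[X]
  q : ℂ[X]
  coprime : IsCoprime p q
  deg : max p.natDegree q.natDegree = d

/-- The induced self-map of the Riemann sphere. -/
def RatMap.toFun {d : ℕ} (F : RatMap d) : Sphere → Sphere := ratEval F.p F.q

/-- Two rational maps are `δ`-close if all their coefficients are `δ`-close. -/
def ratClose {d : ℕ} (δ : ℝ) (F G : RatMap d) : Prop :=
  ∀ i : ℕ, ‖F.p.coeff i - G.p.coeff i‖ ≤ δ ∧ ‖F.q.coeff i - G.q.coeff i‖ ≤ δ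

/-- The `n`-th iterate of a self-map of the sphere, read in the finite chart. -/
def iterC (f : Sphere → Sphere) (n : ℕ) : ℂ → ℂ := fun w => toC (f^[n] ↑w)

/-- The conjugate of `f` by the inversion of the sphere. -/
def conjInv (f : Sphere → Sphere) : Sphere → Sphere := sphInv ∘ f ∘ sphInv

/-- All periodic points of `f : Sphere → Sphere` are hyperbolic: the multiplier of each
cycle (computed in the affine chart at a finite point of the cycle, or in the chart at
`∞` for the fixed point `∞`) has modulus `≠ 1`. -/
def HypPeriodic (f : Sphere → Sphere) : Prop :=
  ∀ x ∈ Function.periodicPts f, ∀ n : ℕ, 0 < n → f^[n] x = x →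
    (x = ∞ → ‖deriv (iterC (conjInv f) n) 0‖ ≠ 1) ∧
    (x ≠ ∞ → ‖deriv (iterC f n) (toC x)‖ ≠ 1)

/-- A rational map is weakly stable if every sufficiently close rational map (of the
same degree) has only hyperbolic periodic points. -/
def WeaklyStable {d : ℕ} (F : RatMap d) : Prop :=
  ∃ δ > 0, ∀ G : RatMap d, ratClose δ F G → HypPeriodic G.toFun

/-- The open unit polydisk in `ℂⁿ`. -/
def polydisk (n : ℕ) : Set (Fin n → ℂ) := {l | ∀ i, ‖l i‖ < 1}

/-- A family of rational maps parametrized by `λ ∈ 𝔻ⁿ` is holomorphic if all its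
coefficients depend holomorphically on the parameter. -/
def HoloFamily {d n : ℕ} (F : (Fin n → ℂ) → RatMap d) : Prop :=
  ∀ i : ℕ, DifferentiableOn ℂ (fun l => (F l).p.coeff i) (polydisk n) ∧
    DifferentiableOn ℂ (fun l => (F l).q.coeff i) (polydisk n)

/-- A map from the parameters to the sphere is holomorphic on `s`: it is continuous and
holomorphic in the affine charts. -/
def HoloSphere {n : ℕ} (u : (Fin n → ℂ) → Sphere) (s : Set (Fin n → ℂ)) : Prop :=
  ContinuousOn u s ∧ ∀ l ∈ s,
    (u l ≠ ∞ → DifferentiableWithinAt ℂ (toC ∘ u) s l) ∧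
    (u l = ∞ → DifferentiableWithinAt ℂ (toC ∘ sphInv ∘ u) s l)

/-!
Near a parameter, a periodic point whose multiplier is not `1` is a simple solution of its fixed
point equation, so two continuations of periodic points that meet once coincide. Suppose that
`pₙ → p₀` takes infinitely many values (otherwise it is eventually constant), and move three of
them, different from `p₀`, to `0`, `1`, `∞` by the cross-ratio with their continuations. The
remaining continuations become holomorphic functions on a disk that omit `0` and `1`; Schottky's
theorem bounds them, and by disjointness their differences have no zeros. Harnack's inequality for
the logarithm of the modulus of a bounded function without zeros then turns smallness of a
difference at the centre into smallness at every other point of the disk, so the continuations form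
a Cauchy sequence there. The convergence spreads from disk to disk over the connected parameter
space.
-/

/-! ### The theorems of Bloch and Schottky -/

section Disk

open Metric

variable {c : ℂ} {R : ℝ}

theorem exists_log_on_ball {f : ℂ → ℂ} (hf : DifferentiableOn ℂ f (ball c R))
    (hf₀ : ∀ z ∈ ball c R, f z ≠ 0) :
    ∃ h : ℂ → ℂ, DifferentiableOn ℂ h (ball c R) ∧ h c = Complex.log (f c) ∧
      ∀ z ∈ ball c R, Complex.exp (h z) = f z := by
  obtain ⟨h, hhc, hh⟩ := ((hf.deriv isOpen_ball).div hf hf₀).isExactOn_ball.with_val_at c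
    (Complex.log (f c))
  have hderiv : ∀ x ∈ ball c R, HasDerivAt (fun z => Complex.exp (h z) / f z) 0 x := by
    intro x hx
    have hfx := (hf.differentiableAt (isOpen_ball.mem_nhds hx)).hasDerivAt
    refine ((hh x hx).cexp.div hfx (hf₀ x hx)).congr_deriv ?_
    have := hf₀ x hx
    simp only [Pi.div_apply]
    field_simp
    ring
  refine ⟨h, fun z hz => (hh z hz).differentiableAt.differentiableWithinAt, hhc, fun z hz => ?_⟩
  have hc : c ∈ ball c R := mem_ball_self (nonempty_ball.1 ⟨z, hz⟩)
  have hconst := isOpen_ball.is_const_of_deriv_eq_zero (convex_ball c R).isPreconnected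
    (fun x hx => (hderiv x hx).differentiableAt.differentiableWithinAt)
    (fun x hx => (hderiv x hx).deriv) hz hc
  simp only [hhc, Complex.exp_log (hf₀ c hc), div_self (hf₀ c hc)] at hconst
  exact (div_eq_one_iff_eq (hf₀ z hz)).1 hconst

theorem exists_le_two_mul_on_closedBall {X : Type*} [PseudoMetricSpace X] [ProperSpace X]
    {L : X → ℝ} {a : X} {r : ℝ} (hL : ContinuousOn L (closedBall a r)) (hr : 0 < r)
    (ha : 0 < L a) :
    ∃ b ∈ ball a r, L a * r ≤ L b * (r - dist b a) ∧
      ∀ z ∈ closedBall b ((r - dist b a) / 2), L z ≤ 2 * L b := by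
  have hcont : ContinuousOn (fun z => L z * (r - dist z a)) (closedBall a r) :=
    hL.mul (by fun_prop)
  obtain ⟨b, hb, hmax⟩ := (isCompact_closedBall a r).exists_isMaxOn
    ⟨a, mem_closedBall_self hr.le⟩ hcont
  have hLa : L a * r ≤ L b * (r - dist b a) := by
    simpa using hmax (mem_closedBall_self hr.le)
  have hpos : 0 < r - dist b a :=
    (sub_nonneg.2 (mem_closedBall.1 hb)).lt_of_ne' fun h => by
      rw [h, mul_zero] at hLa
      exact (mul_pos ha hr).not_ge hLa
  have hLb : 0 < L b := pos_of_mul_pos_left ((mul_pos ha hr).trans_le hLa) hpos.le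
  refine ⟨b, sub_pos.1 hpos, hLa, fun z hz => ?_⟩
  have hza : (r - dist b a) / 2 ≤ r - dist z a := by
    linarith [mem_closedBall.1 hz, dist_triangle z b a]
  have hle : L z * (r - dist z a) ≤ L b * (r - dist b a) :=
    hmax (mem_closedBall.2 (by linarith))
  by_contra! hlt
  nlinarith

theorem norm_sub_sub_mul_le_of_norm_deriv_le {g : ℂ → ℂ} {b : ℂ} {s : ℝ}
    (hg : DifferentiableOn ℂ g (ball b s))
    (hb : ∀ z ∈ ball b s, ‖deriv g z‖ ≤ 2 * ‖deriv g b‖) {z : ℂ} (hz : z ∈ closedBall b (s / 6)) :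
    ‖g z - g b - deriv g b * (z - b)‖ ≤ ‖deriv g b‖ / 2 * ‖z - b‖ := by
  rcases le_or_gt s 0 with hs | hs
  · have : dist z b = 0 := by linarith [mem_closedBall.1 hz, dist_nonneg (x := z) (y := b)]
    simp [dist_eq_zero.1 this]
  have hsub : closedBall b (s / 6) ⊆ ball b s := closedBall_subset_ball (by linarith)
  have hmaps : MapsTo (deriv g) (ball b s) (closedBall (deriv g b) (3 * ‖deriv g b‖)) :=
    fun x hx => by
      rw [mem_closedBall, dist_eq_norm]
      linarith [norm_sub_le (deriv g x) (deriv g b), hb x hx]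
  have hschwarz : ∀ x ∈ closedBall b (s / 6), ‖deriv g x - deriv g b‖ ≤ ‖deriv g b‖ / 2 :=
    fun x hx => calc
      ‖deriv g x - deriv g b‖ ≤ 3 * ‖deriv g b‖ / s * dist x b :=
        (dist_eq_norm _ _).symm.trans_le <|
          Complex.dist_le_div_mul_dist_of_mapsTo_ball (hg.deriv isOpen_ball) hmaps (hsub hx)
      _ ≤ 3 * ‖deriv g b‖ / s * (s / 6) := by gcongr; exact hx
      _ = ‖deriv g b‖ / 2 := by field_simp; ring
  have hmvt := (convex_closedBall b (s / 6)).norm_image_sub_le_of_norm_hasDerivWithin_le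
    (f := fun x => g x - deriv g b * x)
    (fun x hx => ((hg.differentiableAt (isOpen_ball.mem_nhds (hsub hx))).hasDerivAt.sub
      ((hasDerivAt_id x).const_mul (deriv g b))).hasDerivWithinAt)
    (by simpa using hschwarz) (mem_closedBall_self (by positivity)) hz
  rwa [sub_sub_sub_comm, ← mul_sub] at hmvt

theorem ball_subset_image_ball_of_norm_deriv_le {g : ℂ → ℂ} {b : ℂ} {s : ℝ}
    (hg : DifferentiableOn ℂ g (ball b s)) (hb₀ : deriv g b ≠ 0)
    (hb : ∀ z ∈ ball b s, ‖deriv g z‖ ≤ 2 * ‖deriv g b‖) :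
    ball (g b) (‖deriv g b‖ * s / 24) ⊆ g '' ball b s := by
  rcases le_or_gt s 0 with hs | hs
  · rw [ball_eq_empty.2 (by nlinarith [norm_nonneg (deriv g b)])]
    exact empty_subset _
  have hsub : closedBall b (s / 6) ⊆ ball b s := closedBall_subset_ball (by linarith)
  have hsphere : ∀ z ∈ sphere b (s / 6), ‖deriv g b‖ * s / 12 ≤ ‖g z - g b‖ := by
    intro z hz
    have hlin := norm_sub_sub_mul_le_of_norm_deriv_le hg hb (sphere_subset_closedBall hz)
    have htri := norm_le_norm_add_norm_sub' (deriv g b * (z - b)) (g z - g b)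
    rw [norm_sub_rev (deriv g b * _), norm_mul] at htri
    rw [mem_sphere_iff_norm.1 hz] at hlin htri
    linarith
  have hfreq : ∃ᶠ z in 𝓝 b, g z ≠ g b :=
    ((hg.differentiableAt (ball_mem_nhds b hs)).hasDerivAt.eventually_ne
      hb₀).frequently.filter_mono nhdsWithin_le_nhds
  calc ball (g b) (‖deriv g b‖ * s / 24) = ball (g b) (‖deriv g b‖ * s / 12 / 2) := by ring_nf
    _ ⊆ g '' closedBall b (s / 6) := (hg.diffContOnCl_ball hsub).ball_subset_image_closedBall
      (by positivity) hsphere hfreq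
    _ ⊆ g '' ball b s := image_mono hsub

theorem exists_ball_subset_image_closedBall {g : ℂ → ℂ} {U : Set ℂ} {a : ℂ} {r : ℝ}
    (hU : IsOpen U) (hg : DifferentiableOn ℂ g U) (hr : 0 ≤ r) (hsub : closedBall a r ⊆ U) :
    ∃ w, ball w (‖deriv g a‖ * r / 48) ⊆ g '' closedBall a r := by
  rcases hr.eq_or_lt with rfl | hr
  · exact ⟨0, by simp⟩
  by_cases ha : deriv g a = 0
  · exact ⟨0, by simp [ha]⟩
  obtain ⟨b, hb, hab, hle⟩ := exists_le_two_mul_on_closedBall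
    ((hg.deriv hU).continuousOn.norm.mono hsub) hr (norm_pos_iff.2 ha)
  have hb₀ : deriv g b ≠ 0 := fun h => by
    rw [h, norm_zero, zero_mul] at hab
    exact (mul_pos (norm_pos_iff.2 ha) hr).not_ge hab
  have hbr : ball b ((r - dist b a) / 2) ⊆ closedBall a r :=
    (ball_subset_ball' (by linarith [mem_ball.1 hb])).trans ball_subset_closedBall
  refine ⟨g b, ?_⟩
  calc ball (g b) (‖deriv g a‖ * r / 48)
    _ ⊆ ball (g b) (‖deriv g b‖ * ((r - dist b a) / 2) / 24) := ball_subset_ball (by linarith)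
    _ ⊆ g '' ball b ((r - dist b a) / 2) :=
      ball_subset_image_ball_of_norm_deriv_le (hg.mono (hbr.trans hsub)) hb₀
        fun z hz => hle z (ball_subset_closedBall hz)
    _ ⊆ g '' closedBall a r := image_mono hbr

end Disk

section Schottky

open Metric

variable {c : ℂ} {R : ℝ}

theorem norm_deriv_mul_le_of_forall_exists_notMem_image {g : ℂ → ℂ} {U : Set ℂ} {a : ℂ} {r s : ℝ}
    (hU : IsOpen U) (hg : DifferentiableOn ℂ g U) (hr : 0 ≤ r) (hsub : closedBall a r ⊆ U)
    (hs : ∀ w, ∃ v ∈ ball w s, v ∉ g '' U) : ‖deriv g a‖ * r ≤ 48 * s := by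
  obtain ⟨w, hw⟩ := exists_ball_subset_image_closedBall hU hg hr hsub
  obtain ⟨v, hv, hvg⟩ := hs w
  by_contra! hlt
  exact hvg (image_mono hsub (hw (ball_subset_ball (by linarith) hv)))

theorem norm_cosh_le_exp_abs_re (w : ℂ) : ‖Complex.cosh w‖ ≤ Real.exp |w.re| := by
  have hpos : ‖Complex.exp w‖ ≤ Real.exp |w.re| := by
    rw [Complex.norm_exp]
    gcongr
    exact le_abs_self _
  have hneg : ‖Complex.exp (-w)‖ ≤ Real.exp |w.re| := by
    rw [Complex.norm_exp, Complex.neg_re]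
    gcongr
    exact neg_le_abs _
  rw [Complex.cosh, norm_div, Complex.norm_ofNat]
  linarith [norm_add_le (Complex.exp w) (Complex.exp (-w))]

theorem exp_abs_re_le_two_mul_norm_cosh_add_one (w : ℂ) :
    Real.exp |w.re| ≤ 2 * ‖Complex.cosh w‖ + 1 := by
  wlog hw : 0 ≤ w.re generalizing w
  · simpa using this (-w) (by simpa using (not_le.1 hw).le)
  have hneg : ‖Complex.exp (-w)‖ ≤ 1 := by simpa [Complex.norm_exp] using hw
  have hexp : Complex.exp w = 2 * Complex.cosh w - Complex.exp (-w) := by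
    rw [Complex.cosh]
    ring
  calc Real.exp |w.re| = ‖Complex.exp w‖ := by rw [abs_of_nonneg hw, Complex.norm_exp]
    _ ≤ ‖2 * Complex.cosh w‖ + ‖Complex.exp (-w)‖ := hexp ▸ norm_sub_le _ _
    _ ≤ 2 * ‖Complex.cosh w‖ + 1 := by rw [norm_mul, Complex.norm_ofNat]; gcongr

theorem exists_cosh_eq_on_ball {P : ℂ → ℂ} (hP : DifferentiableOn ℂ P (ball c R))
    (hP₁ : ∀ z ∈ ball c R, P z ≠ 1) (hP₂ : ∀ z ∈ ball c R, P z ≠ -1) :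
    ∃ h : ℂ → ℂ, DifferentiableOn ℂ h (ball c R) ∧ ∀ z ∈ ball c R, Complex.cosh (h z) = P z := by
  obtain ⟨l, hl, -, hlP⟩ := exists_log_on_ball (f := fun z => P z ^ 2 - 1)
    ((hP.pow 2).sub_const 1) fun z hz => by
      rw [sub_ne_zero, sq_ne_one_iff]
      exact ⟨hP₁ z hz, hP₂ z hz⟩
  have hprod : ∀ z ∈ ball c R,
      (P z + Complex.exp (l z / 2)) * (P z - Complex.exp (l z / 2)) = 1 := fun z hz => by
    have hsq : Complex.exp (l z / 2) ^ 2 = P z ^ 2 - 1 := by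
      rw [← Complex.exp_nat_mul, ← hlP z hz]
      congr 1
      push_cast
      ring
    linear_combination -hsq
  obtain ⟨h, hh, -, hhP⟩ := exists_log_on_ball (hP.add (hl.div_const 2).cexp)
    fun z hz => left_ne_zero_of_mul_eq_one (hprod z hz)
  refine ⟨h, hh, fun z hz => ?_⟩
  rw [Complex.cosh, Complex.exp_neg, hhP z hz, Pi.add_apply,
    inv_eq_of_mul_eq_one_right (hprod z hz)]
  ring

theorem exists_abs_sub_le_two_cosh_eq_odd (x : ℝ) :
    ∃ y, |x - y| ≤ 2 ∧ ∃ k : ℤ, Odd k ∧ Real.cosh y = k := by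
  wlog hx : 0 ≤ x generalizing x
  · obtain ⟨y, hy, hk⟩ := this (-x) (by linarith)
    exact ⟨-y, by rwa [← abs_neg, neg_sub', neg_neg], by simpa using hk⟩
  set k : ℤ := 2 * ⌈(Real.cosh x - 1) / 2⌉ + 1 with hk
  have hle : Real.cosh x ≤ k := by
    rw [hk]
    push_cast
    linarith [Int.le_ceil ((Real.cosh x - 1) / 2)]
  have hgrowth : Real.cosh x + 2 ≤ Real.cosh (x + 2) := by
    have hadd : Real.cosh (x + 2) =
        Real.cosh (x + 1) * Real.cosh 1 + Real.sinh (x + 1) * Real.sinh 1 := by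
      rw [← Real.cosh_add, add_assoc, one_add_one_eq_two]
    have hsub : Real.cosh x =
        Real.cosh (x + 1) * Real.cosh 1 - Real.sinh (x + 1) * Real.sinh 1 := by
      rw [← Real.cosh_sub, add_sub_cancel_right]
    have hx₁ : 1 ≤ Real.sinh (x + 1) :=
      le_trans (by linarith) (Real.self_le_sinh_iff.2 (by linarith))
    linarith [one_le_mul_of_one_le_of_one_le hx₁ (Real.self_le_sinh_iff.2 zero_le_one)]
  have hge : (k : ℝ) ≤ Real.cosh (x + 2) := by
    refine le_trans ?_ hgrowth
    rw [hk]
    push_cast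
    linarith [Int.ceil_lt_add_one ((Real.cosh x - 1) / 2)]
  obtain ⟨y, ⟨hxy, hyx⟩, hy⟩ := intermediate_value_Icc (by linarith : x ≤ x + 2)
    Real.continuous_cosh.continuousOn ⟨hle, hge⟩
  exact ⟨y, abs_le.2 ⟨by linarith, by linarith⟩, k, odd_two_mul_add_one _, hy⟩

theorem exists_mem_ball_cosh_eq_odd (w : ℂ) :
    ∃ v ∈ ball w 4, ∃ k : ℤ, Odd k ∧ Complex.cosh v = k := by
  obtain ⟨y, hy, k, hk, hyk⟩ := exists_abs_sub_le_two_cosh_eq_odd w.re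
  set m : ℤ := round (w.im / Real.pi)
  have hm : |w.im - m * Real.pi| ≤ Real.pi / 2 := calc
    |w.im - m * Real.pi| = |w.im / Real.pi - m| * Real.pi := by
      rw [← abs_of_pos Real.pi_pos, ← abs_mul, abs_of_pos Real.pi_pos]
      field_simp
    _ ≤ 1 / 2 * Real.pi := by gcongr; exact abs_sub_round _
    _ = Real.pi / 2 := by ring
  refine ⟨y + (m * Real.pi : ℝ) * Complex.I, ?_, ?_⟩
  · rw [mem_ball', dist_eq_norm]
    refine (Complex.norm_le_abs_re_add_abs_im _).trans_lt ?_
    have hre : (w - (y + (m * Real.pi : ℝ) * Complex.I)).re = w.re - y := by simp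
    have him : (w - (y + (m * Real.pi : ℝ) * Complex.I)).im = w.im - m * Real.pi := by simp
    rw [hre, him]
    linarith [Real.pi_lt_four]
  · have hcosh : Complex.cosh (y + (m * Real.pi : ℝ) * Complex.I) = k * (-1) ^ m := by
      rw [Complex.cosh_add, Complex.cosh_mul_I, Complex.sinh_mul_I, ← Complex.ofReal_cos,
        ← Complex.ofReal_sin, Real.sin_int_mul_pi, Real.cos_int_mul_pi, ← Complex.ofReal_cosh, hyk]
      simp
    rcases m.even_or_odd with hm | hm
    · exact ⟨k, hk, by rw [hcosh, hm.neg_one_zpow, mul_one]⟩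
    · exact ⟨-k, hk.neg, by rw [hcosh, hm.neg_one_zpow]; push_cast; ring⟩

theorem norm_le_of_forall_ne_odd {P : ℂ → ℂ} {r : ℝ} (hP : DifferentiableOn ℂ P (ball c R))
    (hodd : ∀ z ∈ ball c R, ∀ k : ℤ, Odd k → P z ≠ k) (hrR : r < R) {z : ℂ}
    (hz : z ∈ closedBall c r) :
    ‖P z‖ ≤ (2 * ‖P c‖ + 1) * Real.exp (384 / (R - r) * r) := by
  have hr : 0 ≤ r := nonempty_closedBall.1 ⟨z, hz⟩
  have hsub : closedBall c r ⊆ ball c R := closedBall_subset_ball hrR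
  have hc : c ∈ closedBall c r := mem_closedBall_self hr
  obtain ⟨h, hh, hhP⟩ := exists_cosh_eq_on_ball hP
    (fun z hz => by simpa using hodd z hz 1 odd_one)
    (fun z hz => by simpa using hodd z hz (-1) (by decide))
  -- `h` omits a `4`-net of the plane, so Bloch's theorem bounds its derivative.
  have homit : ∀ w, ∃ v ∈ ball w 4, v ∉ h '' ball c R := fun w => by
    obtain ⟨v, hv, k, hk, hvk⟩ := exists_mem_ball_cosh_eq_odd w
    refine ⟨v, hv, ?_⟩
    rintro ⟨z, hz, rfl⟩
    exact hodd z hz k hk ((hhP z hz).symm.trans hvk)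
  have hderiv : ∀ x ∈ closedBall c r, ‖deriv h x‖ ≤ 384 / (R - r) := by
    intro x hx
    have hx' : closedBall x ((R - r) / 2) ⊆ ball c R := fun y hy => by
      rw [mem_closedBall] at hx hy
      rw [mem_ball]
      linarith [dist_triangle y x c]
    rw [le_div_iff₀ (sub_pos.2 hrR)]
    linarith [norm_deriv_mul_le_of_forall_exists_notMem_image isOpen_ball hh
      (by linarith) hx' homit]
  have hincr : ‖h z - h c‖ ≤ 384 / (R - r) * r := by
    have hmvt := (convex_closedBall c r).norm_image_sub_le_of_norm_deriv_le
      (fun x hx => hh.differentiableAt (isOpen_ball.mem_nhds (hsub hx))) hderiv hc hz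
    refine hmvt.trans ?_
    have := sub_pos.2 hrR
    gcongr
    exact mem_closedBall_iff_norm.1 hz
  calc ‖P z‖ ≤ Real.exp |(h z).re| := by
        rw [← hhP z (hsub hz)]
        exact norm_cosh_le_exp_abs_re _
    _ ≤ Real.exp (|(h c).re| + 384 / (R - r) * r) := by
        gcongr
        have hre := (Complex.abs_re_le_norm (h z - h c)).trans hincr
        rw [Complex.sub_re] at hre
        linarith [abs_sub_abs_le_abs_sub (h z).re (h c).re]
    _ ≤ (2 * ‖P c‖ + 1) * Real.exp (384 / (R - r) * r) := by
        rw [Real.exp_add, ← hhP c (hsub hc)]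
        gcongr
        exact exp_abs_re_le_two_mul_norm_cosh_add_one _

theorem exists_exp_pi_mul_I_mul_eq_neg {f : ℂ → ℂ} (hf : DifferentiableOn ℂ f (ball c R))
    (hf₀ : ∀ z ∈ ball c R, f z ≠ 0) :
    ∃ P : ℂ → ℂ, DifferentiableOn ℂ P (ball c R) ∧ ‖P c‖ ≤ |Real.log ‖f c‖| + 1 ∧
      ∀ z ∈ ball c R, Complex.exp (Real.pi * Complex.I * P z) = -f z := by
  obtain ⟨h, hh, hhc, hhf⟩ := exists_log_on_ball hf.neg fun z hz => neg_ne_zero.2 (hf₀ z hz)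
  have hnorm : ‖(Real.pi * Complex.I : ℂ)‖ = Real.pi := by simp [abs_of_pos Real.pi_pos]
  refine ⟨fun z => h z / (Real.pi * Complex.I), hh.div_const _, ?_, fun z hz => ?_⟩
  · rw [norm_div, hnorm, div_le_iff₀ Real.pi_pos, hhc]
    calc ‖Complex.log ((-f) c)‖ ≤ |Real.log ‖f c‖| + Real.pi := by
          refine (Complex.norm_le_abs_re_add_abs_im _).trans ?_
          rw [Complex.log_re, Complex.log_im, Pi.neg_apply, norm_neg]
          gcongr
          exact Complex.abs_arg_le_pi _
      _ ≤ (|Real.log ‖f c‖| + 1) * Real.pi := by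
          nlinarith [abs_nonneg (Real.log ‖f c‖), Real.pi_gt_three]
  · rw [mul_div_cancel₀ _ (by simp [Real.pi_ne_zero]), hhf z hz, Pi.neg_apply]

theorem schottky_bound {f : ℂ → ℂ} {r : ℝ} (hf : DifferentiableOn ℂ f (ball c R))
    (hf₀ : ∀ z ∈ ball c R, f z ≠ 0) (hf₁ : ∀ z ∈ ball c R, f z ≠ 1) (hrR : r < R) {z : ℂ}
    (hz : z ∈ closedBall c r) :
    ‖f z‖ ≤ Real.exp (Real.pi *
      ((2 * |Real.log ‖f c‖| + 3) * Real.exp (384 / (R - r) * r))) := by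
  obtain ⟨P, hP, hPc, hPf⟩ := exists_exp_pi_mul_I_mul_eq_neg hf hf₀
  have hodd : ∀ z ∈ ball c R, ∀ k : ℤ, Odd k → P z ≠ k := fun z hz k hk hzk => by
    refine hf₁ z hz (neg_injective ?_)
    rw [← hPf z hz, hzk, mul_comm, Complex.exp_int_mul, Complex.exp_pi_mul_I, hk.neg_one_zpow]
  calc ‖f z‖ = ‖Complex.exp (Real.pi * Complex.I * P z)‖ := by
        rw [hPf z (closedBall_subset_ball hrR hz), norm_neg]
    _ ≤ Real.exp (Real.pi * ‖P z‖) := by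
        refine (Complex.norm_exp_le_exp_norm _).trans_eq ?_
        simp [abs_of_pos Real.pi_pos]
    _ ≤ _ := by
        gcongr
        refine (norm_le_of_forall_ne_odd hP hodd hrR hz).trans ?_
        gcongr ?_ * _
        linarith

end Schottky

/-! ### Holomorphic functions with disjoint graphs -/

/-- The graphs over `s` of any two members of the family are equal or disjoint. -/
def GraphsDisjointOrEqOn {ι X Y : Type*} (u : ι → X → Y) (s : Set X) : Prop :=
  ∀ i j, (∃ x ∈ s, u i x = u j x) → EqOn (u i) (u j) s

theorem GraphsDisjointOrEqOn.ne {ι X Y : Type*} {u : ι → X → Y} {s : Set X}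
    (hu : GraphsDisjointOrEqOn u s) {i j : ι} {x y : X} (hx : x ∈ s) (h : u i x ≠ u j x)
    (hy : y ∈ s) : u i y ≠ u j y :=
  fun heq => h (hu i j ⟨y, hy, heq⟩ hx)

section Harnack

open Metric ComplexConjugate

variable {c : ℂ} {R : ℝ}

theorem norm_sub_le_norm_add_conj {z w : ℂ} (hz : 0 ≤ z.re) (hw : 0 ≤ w.re) :
    ‖z - w‖ ≤ ‖z + conj w‖ := by
  rw [← sq_le_sq₀ (norm_nonneg _) (norm_nonneg _), Complex.sq_norm, Complex.sq_norm,
    Complex.normSq_apply, Complex.normSq_apply]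
  simp only [Complex.sub_re, Complex.sub_im, Complex.add_re, Complex.add_im, Complex.conj_re,
    Complex.conj_im]
  nlinarith

theorem re_sub_re_le_of_norm_sub_le {z w : ℂ} {ρ : ℝ} (hz : 0 ≤ z.re) (hw : 0 ≤ w.re) (hρ : 0 ≤ ρ)
    (hρ₁ : ρ ≤ 1) (h : ‖z - w‖ ≤ ρ * ‖z + conj w‖) : w.re - z.re ≤ ρ * (z.re + w.re) := by
  rw [← sq_le_sq₀ (norm_nonneg _) (by positivity), mul_pow, Complex.sq_norm, Complex.sq_norm,
    Complex.normSq_apply, Complex.normSq_apply] at h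
  simp only [Complex.sub_re, Complex.sub_im, Complex.add_re, Complex.add_im, Complex.conj_re,
    Complex.conj_im] at h
  refine le_of_sq_le_sq ?_ (by positivity)
  nlinarith [mul_le_of_le_one_left (sq_nonneg (z.im - w.im)) (pow_le_one₀ hρ hρ₁ (n := 2))]

theorem harnack_le_re {v : ℂ → ℂ} (hv : DifferentiableOn ℂ v (ball c R))
    (hpos : ∀ z ∈ ball c R, 0 < (v z).re) {z : ℂ} (hz : z ∈ ball c R) :
    (R - dist z c) / (R + dist z c) * (v c).re ≤ (v z).re := by
  have hR : 0 < R := nonempty_ball.1 ⟨z, hz⟩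
  have hc : c ∈ ball c R := mem_ball_self hR
  have hden : ∀ x ∈ ball c R, v x + conj (v c) ≠ 0 := fun x hx h => by
    have hre := congrArg Complex.re h
    rw [Complex.add_re, Complex.conj_re, Complex.zero_re] at hre
    linarith [hpos x hx, hpos c hc]
  have hmaps : MapsTo (fun x => (v x - v c) / (v x + conj (v c))) (ball c R)
      (closedBall ((v c - v c) / (v c + conj (v c))) 1) := fun x hx => by
    rw [sub_self, zero_div, mem_closedBall_zero_iff, norm_div]
    exact div_le_one_of_le₀ (norm_sub_le_norm_add_conj (hpos x hx).le (hpos c hc).le)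
      (norm_nonneg _)
  have hschwarz : ‖v z - v c‖ ≤ dist z c / R * ‖v z + conj (v c)‖ := by
    have h := Complex.dist_le_div_mul_dist_of_mapsTo_ball
      ((hv.sub_const _).fun_div (hv.add_const _) hden) hmaps hz
    rwa [sub_self, zero_div, dist_zero_right, norm_div, div_le_iff₀ (norm_pos_iff.2 (hden z hz)),
      one_div_mul_eq_div] at h
  have hre := re_sub_re_le_of_norm_sub_le (hpos z hz).le (hpos c hc).le (by positivity)
    ((div_le_one hR).2 (mem_ball.1 hz).le) hschwarz
  rw [div_mul_eq_mul_div, le_div_iff₀ hR] at hre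
  rw [div_mul_eq_mul_div, div_le_iff₀ (by positivity)]
  linarith

theorem norm_le_mul_rpow_of_ne_zero {h : ℂ → ℂ} {M : ℝ} (hh : DifferentiableOn ℂ h (ball c R))
    (hh₀ : ∀ z ∈ ball c R, h z ≠ 0) (hM : ∀ z ∈ ball c R, ‖h z‖ < M) {z : ℂ} (hz : z ∈ ball c R) :
    ‖h z‖ ≤ M * (‖h c‖ / M) ^ ((R - dist z c) / (R + dist z c)) := by
  have hc : c ∈ ball c R := mem_ball_self (nonempty_ball.1 ⟨z, hz⟩)
  have hM₀ : 0 < M := (norm_nonneg _).trans_lt (hM z hz)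
  have hM' : (M : ℂ) ≠ 0 := mod_cast hM₀.ne'
  obtain ⟨l, hl, -, hlh⟩ := exists_log_on_ball (f := fun z => h z / M) (hh.div_const _)
    fun z hz => div_ne_zero (hh₀ z hz) hM'
  have hexp : ∀ x ∈ ball c R, Real.exp (l x).re = ‖h x‖ / M := fun x hx => by
    rw [← Complex.norm_exp, hlh x hx, norm_div, Complex.norm_of_nonneg hM₀.le]
  have hpos : ∀ x ∈ ball c R, 0 < (-l x).re := fun x hx => by
    rw [Complex.neg_re, neg_pos, ← Real.exp_lt_one_iff, hexp x hx, div_lt_one hM₀]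
    exact hM x hx
  have hharnack := harnack_le_re hl.neg hpos hz
  rw [← div_le_iff₀' hM₀, ← hexp z hz, ← hexp c hc, ← Real.exp_mul, Real.exp_le_exp, mul_comm]
  simpa using hharnack

end Harnack

section DisjointGraphs

open Metric

variable {ι : Type*} {L : Filter ι} {c : ℂ} {R : ℝ}

theorem norm_sub_le_of_graphsDisjointOrEqOn {g : ι → ℂ → ℂ}
    (hg : ∀ i, DifferentiableOn ℂ (g i) (ball c R)) (hdisj : GraphsDisjointOrEqOn g (ball c R))
    {M : ℝ} {i j : ι} (hi : ∀ z ∈ ball c R, ‖g i z‖ < M) (hj : ∀ z ∈ ball c R, ‖g j z‖ < M) {z : ℂ}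
    (hz : z ∈ ball c R) :
    ‖g i z - g j z‖ ≤
      2 * M * (‖g i c - g j c‖ / (2 * M)) ^ ((R - dist z c) / (R + dist z c)) := by
  have hM : 0 < M := (norm_nonneg _).trans_lt (hi z hz)
  by_cases hmeet : ∃ x ∈ ball c R, g i x = g j x
  · rw [hdisj i j hmeet hz, sub_self, norm_zero]
    positivity
  · push Not at hmeet
    exact norm_le_mul_rpow_of_ne_zero (h := fun x => g i x - g j x) ((hg i).sub (hg j))
      (fun x hx => sub_ne_zero.2 (hmeet x hx))
      (fun x hx => by linarith [norm_sub_le (g i x) (g j x), hi x hx, hj x hx]) hz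

theorem exists_eventually_norm_lt_of_omits {g : ι → ℂ → ℂ} {r : ℝ}
    (hg : ∀ i, DifferentiableOn ℂ (g i) (ball c R)) (hg₀ : ∀ i, ∀ z ∈ ball c R, g i z ≠ 0)
    (hg₁ : ∀ i, ∀ z ∈ ball c R, g i z ≠ 1) {w : ℂ} (hw : w ≠ 0)
    (hlim : Tendsto (fun i => g i c) L (𝓝 w)) (hrR : r < R) :
    ∃ M, ∀ᶠ i in L, ∀ z ∈ closedBall c r, ‖g i z‖ < M := by
  have hbound : Tendsto (fun i => Real.exp (Real.pi *
      ((2 * |Real.log ‖g i c‖| + 3) * Real.exp (384 / (R - r) * r)))) L (𝓝 _) :=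
    (((((hlim.norm.log (norm_ne_zero_iff.2 hw)).abs.const_mul 2).add_const 3).mul_const
      _).const_mul Real.pi).rexp
  exact ⟨_, (hbound.eventually_lt_const (lt_add_one _)).mono fun i hi z hz =>
    (schottky_bound (hg i) (hg₀ i) (hg₁ i) hrR hz).trans_lt hi⟩

theorem exists_tendsto_of_graphsDisjointOrEqOn [L.NeBot] {g : ι → ℂ → ℂ}
    (hg : ∀ i, DifferentiableOn ℂ (g i) (ball c R)) (hg₀ : ∀ i, ∀ z ∈ ball c R, g i z ≠ 0)
    (hg₁ : ∀ i, ∀ z ∈ ball c R, g i z ≠ 1) (hdisj : GraphsDisjointOrEqOn g (ball c R)) {w : ℂ}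
    (hw : w ≠ 0) (hlim : Tendsto (fun i => g i c) L (𝓝 w)) {z : ℂ} (hz : z ∈ ball c R) :
    ∃ x, Tendsto (fun i => g i z) L (𝓝 x) := by
  obtain ⟨r, hzr, hrR⟩ := exists_between (mem_ball.1 hz)
  have hsub : ball c r ⊆ ball c R := ball_subset_ball hrR.le
  obtain ⟨M, hM⟩ := exists_eventually_norm_lt_of_omits hg hg₀ hg₁ hw hlim hrR
  have hr : 0 < r := dist_nonneg.trans_lt hzr
  set κ := (r - dist z c) / (r + dist z c)
  have hκ : 0 < κ := div_pos (sub_pos.2 hzr) (by positivity)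
  have hpair : ∀ᶠ p in L ×ˢ L,
      ‖g p.1 z - g p.2 z‖ ≤ 2 * M * (‖g p.1 c - g p.2 c‖ / (2 * M)) ^ κ := by
    filter_upwards [hM.prod_mk hM] with p hp
    exact norm_sub_le_of_graphsDisjointOrEqOn (fun i => (hg i).mono hsub)
      (fun i j ⟨x, hx, h⟩ => (hdisj i j ⟨x, hsub hx, h⟩).mono hsub)
      (fun x hx => hp.1 x (ball_subset_closedBall hx))
      (fun x hx => hp.2 x (ball_subset_closedBall hx)) hzr
  have hcenter : Tendsto (fun p : ι × ι => ‖g p.1 c - g p.2 c‖) (L ×ˢ L) (𝓝 0) := by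
    simpa using ((hlim.comp tendsto_fst).sub (hlim.comp tendsto_snd)).norm
  have hmodulus : Tendsto (fun x : ℝ => 2 * M * (x / (2 * M)) ^ κ) (𝓝 0) (𝓝 0) := by
    have hcont : Continuous fun x : ℝ => 2 * M * (x / (2 * M)) ^ κ :=
      continuous_const.mul ((continuous_id.div_const _).rpow_const fun _ => Or.inr hκ.le)
    simpa [Real.zero_rpow hκ.ne'] using hcont.tendsto 0
  refine cauchy_map_iff_exists_tendsto.1 (cauchy_map_iff'.2 ?_)
  rw [uniformity_eq_comap_nhds_zero, tendsto_comap_iff]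
  refine squeeze_zero_norm' (hpair.mono fun p hp => ?_) (hmodulus.comp hcenter)
  rwa [Function.comp_apply, norm_sub_rev]

end DisjointGraphs

/-! ### Homogeneous coordinates and the cross-ratio -/

section SphereCharts

@[simp]
theorem toC_coe (z : ℂ) : toC (z : Sphere) = z :=
  OnePoint.coe_injective.extend_apply _ _ z

@[simp]
theorem toC_infty : toC ∞ = 0 :=
  Function.extend_apply' _ _ _ (by simp)

theorem coe_toC {x : Sphere} (hx : x ≠ ∞) : (toC x : Sphere) = x := by
  obtain ⟨z, rfl⟩ := OnePoint.ne_infty_iff_exists.1 hx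
  rw [toC_coe]

@[simp]
theorem sphInv_infty : sphInv ∞ = ((0 : ℂ) : Sphere) := by
  simp [sphInv]

@[simp]
theorem sphInv_zero : sphInv ((0 : ℂ) : Sphere) = ∞ := by
  simp [sphInv]

theorem sphInv_coe {z : ℂ} (hz : z ≠ 0) : sphInv (z : Sphere) = ((z⁻¹ : ℂ) : Sphere) := by
  simp [sphInv, hz]

theorem sphInv_involutive : Function.Involutive sphInv := by
  intro x
  induction x using OnePoint.rec with
  | infty => simp
  | coe z =>
    rcases eq_or_ne z 0 with rfl | hz
    · simp
    · rw [sphInv_coe hz, sphInv_coe (inv_ne_zero hz), inv_inv]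

theorem sphInv_ne_infty {x : Sphere} (hx : x ≠ ((0 : ℂ) : Sphere)) : sphInv x ≠ ∞ := fun h =>
  hx (by rw [← sphInv_involutive x, h, sphInv_infty])

theorem continuousAt_toC {x : Sphere} (hx : x ≠ ∞) : ContinuousAt toC x := by
  obtain ⟨z, rfl⟩ := OnePoint.ne_infty_iff_exists.1 hx
  rw [OnePoint.continuousAt_coe]
  exact continuousAt_id.congr (Eventually.of_forall fun z => (toC_coe z).symm)

theorem continuous_sphInv : Continuous sphInv := by
  have hinv : ∀ᶠ z : ℂ in 𝓝[≠] 0, ((z⁻¹ : ℂ) : Sphere) = sphInv z :=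
    eventually_mem_nhdsWithin.mono fun z hz => (sphInv_coe hz).symm
  refine continuous_iff_continuousAt.2 fun x => ?_
  induction x using OnePoint.rec with
  | infty =>
    rw [OnePoint.continuousAt_infty', sphInv_infty, coclosedCompact_eq_cocompact,
      ← Metric.cobounded_eq_cocompact]
    refine ((OnePoint.continuous_coe.tendsto 0).comp (tendsto_inv₀_cobounded (α := ℂ))).congr' ?_
    filter_upwards [Bornology.eventually_ne_cobounded (0 : ℂ)] with z hz using (sphInv_coe hz).symm
  | coe z =>
    rw [OnePoint.continuousAt_coe]
    rcases eq_or_ne z 0 with rfl | hz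
    · have hlim := tendsto_inv₀_nhdsNE_zero (α := ℂ)
      rw [Metric.cobounded_eq_cocompact, ← coclosedCompact_eq_cocompact] at hlim
      rw [← continuousWithinAt_compl_self, ContinuousWithinAt, Function.comp_apply, sphInv_zero]
      exact ((OnePoint.tendsto_coe_infty (X := ℂ)).comp hlim).congr' hinv
    · refine (OnePoint.continuous_coe.continuousAt.comp (continuousAt_inv₀ hz)).congr ?_
      filter_upwards [eventually_ne_nhds hz] with w hw using (sphInv_coe hw).symm

end SphereCharts

section HomogeneousCoordinates

/-- The point of the Riemann sphere with homogeneous coordinates `v`, the finite point `z` being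
`[z : 1]` (junk value `∞` at `v = 0`). -/
def ofHom (v : ℂ × ℂ) : Sphere := if v.2 = 0 then ∞ else ((v.1 / v.2 : ℂ) : Sphere)

theorem ofHom_coe_one (z : ℂ) : ofHom (z, 1) = z := by simp [ofHom]

theorem ofHom_of_snd_eq_zero {v : ℂ × ℂ} (hv : v.2 = 0) : ofHom v = ∞ := if_pos hv

theorem ofHom_of_snd_ne_zero {v : ℂ × ℂ} (hv : v.2 ≠ 0) : ofHom v = ((v.1 / v.2 : ℂ) : Sphere) :=
  if_neg hv

theorem toC_ofHom (v : ℂ × ℂ) : toC (ofHom v) = v.1 / v.2 := by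
  unfold ofHom
  split_ifs with h <;> simp [h]

theorem ofHom_smul {r : ℂ} (hr : r ≠ 0) (v : ℂ × ℂ) : ofHom (r • v) = ofHom v := by
  simp [ofHom, hr, mul_div_mul_left]

theorem ofHom_swap {v : ℂ × ℂ} (hv : v ≠ 0) : ofHom v.swap = sphInv (ofHom v) := by
  obtain ⟨x, y⟩ := v
  rcases eq_or_ne y 0 with rfl | hy
  · have hx : x ≠ 0 := fun h => hv (by simp [h])
    simp [ofHom, hx]
  · rcases eq_or_ne x 0 with rfl | hx
    · simp [ofHom, hy]
    · simp [ofHom, hx, hy, sphInv_coe (div_ne_zero hx hy)]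

theorem ofHom_toC_one {x : Sphere} (hx : x ≠ ∞) : ofHom (toC x, 1) = x := by
  rw [ofHom_coe_one, coe_toC hx]

theorem ofHom_one_toC_sphInv {x : Sphere} (hx : x ≠ ((0 : ℂ) : Sphere)) :
    ofHom (1, toC (sphInv x)) = x := by
  have h := ofHom_swap (v := (toC (sphInv x), 1)) (by simp)
  rwa [ofHom_toC_one (sphInv_ne_infty hx), sphInv_involutive] at h

theorem exists_continuousAt_lift (x : Sphere) :
    ∃ s : Sphere → ℂ × ℂ, ContinuousAt s x ∧ ∀ᶠ y in 𝓝 x, s y ≠ 0 ∧ ofHom (s y) = y := by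
  by_cases hx : x = ∞
  · refine ⟨fun y => (1, toC (sphInv y)), continuousAt_const.prodMk
      ((continuousAt_toC (by simp [hx])).comp continuous_sphInv.continuousAt), ?_⟩
    filter_upwards [eventually_ne_nhds (show x ≠ ((0 : ℂ) : Sphere) by simp [hx])] with y hy
    exact ⟨by simp, ofHom_one_toC_sphInv hy⟩
  · refine ⟨fun y => (toC y, 1), (continuousAt_toC hx).prodMk continuousAt_const, ?_⟩
    filter_upwards [eventually_ne_nhds hx] with y hy
    exact ⟨by simp, ofHom_toC_one hy⟩

theorem continuousAt_ofHom {v : ℂ × ℂ} (hv : v ≠ 0) : ContinuousAt ofHom v := by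
  have hchart : ∀ w : ℂ × ℂ, w.2 ≠ 0 → ContinuousAt ofHom w := fun w hw => by
    refine (OnePoint.continuous_coe.continuousAt.comp
      (continuousAt_fst.div continuousAt_snd hw)).congr ?_
    filter_upwards [continuousAt_snd.eventually_ne hw] with u hu
    exact (ofHom_of_snd_ne_zero hu).symm
  by_cases hv₂ : v.2 = 0
  · have hv₁ : v.swap.2 ≠ 0 := fun h => hv (Prod.ext h hv₂)
    refine (continuous_sphInv.continuousAt.comp
      ((hchart _ hv₁).comp continuous_swap.continuousAt)).congr ?_
    filter_upwards [eventually_ne_nhds hv] with u hu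
    simp only [Function.comp_apply, ofHom_swap hu, sphInv_involutive (ofHom u)]
  · exact hchart v hv₂

/-- The standard homogeneous coordinates `[z : 1]` and `[1 : 0]` of the points of the sphere. -/
def stdLift (x : Sphere) : ℂ × ℂ := if x = ∞ then (1, 0) else (toC x, 1)

theorem stdLift_ne_zero (x : Sphere) : stdLift x ≠ 0 := by
  unfold stdLift
  split_ifs <;> simp

theorem ofHom_stdLift (x : Sphere) : ofHom (stdLift x) = x := by
  unfold stdLift
  split_ifs with h
  · simp [ofHom, h]
  · exact ofHom_toC_one h

theorem exists_eq_smul_stdLift {v : ℂ × ℂ} (hv : v ≠ 0) :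
    ∃ c : ℂ, c ≠ 0 ∧ v = c • stdLift (ofHom v) := by
  by_cases h : v.2 = 0
  · refine ⟨v.1, fun h₁ => hv (Prod.ext h₁ h), ?_⟩
    ext <;> simp [ofHom, stdLift, h]
  · refine ⟨v.2, h, ?_⟩
    ext <;> simp [ofHom, stdLift, h, mul_div_cancel₀]

end HomogeneousCoordinates

section CrossRatio

/-- The determinant of the vectors `v` and `w`, which vanishes when they represent the same point
of the sphere. -/
def det2 (v w : ℂ × ℂ) : ℂ := v.1 * w.2 - v.2 * w.1

theorem det2_smul_smul (s t : ℂ) (v w : ℂ × ℂ) : det2 (s • v) (t • w) = s * t * det2 v w := by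
  simp only [det2, Prod.smul_fst, Prod.smul_snd, smul_eq_mul]
  ring

theorem det2_self (v : ℂ × ℂ) : det2 v v = 0 := by
  rw [det2, mul_comm, sub_self]

theorem det2_swap (v w : ℂ × ℂ) : det2 w v = -det2 v w := by
  rw [det2, det2]
  ring

theorem det2_smul_sub_smul_left (s t : ℂ) (v w x : ℂ × ℂ) :
    det2 (s • v - t • w) x = s * det2 v x - t * det2 w x := by
  simp only [det2, Prod.fst_sub, Prod.snd_sub, Prod.smul_fst, Prod.smul_snd, smul_eq_mul]
  ring

theorem ofHom_eq_iff {v w : ℂ × ℂ} (hv : v ≠ 0) (hw : w ≠ 0) :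
    ofHom v = ofHom w ↔ det2 v w = 0 := by
  obtain ⟨x, y⟩ := v
  obtain ⟨x', y'⟩ := w
  simp only [ofHom, det2, ne_eq, Prod.mk_eq_zero, not_and] at *
  rcases eq_or_ne y 0 with rfl | hy
  · rcases eq_or_ne y' 0 with rfl | hy'
    · simp
    · simp [mt hv, hy']
  · rcases eq_or_ne y' 0 with rfl | hy'
    · simp [mt hw, hy]
    · simp only [hy, hy', if_false, OnePoint.coe_eq_coe]
      rw [div_eq_div_iff hy hy', sub_eq_zero, mul_comm y x']

theorem det2_stdLift_ne_zero {x y : Sphere} (h : x ≠ y) : det2 (stdLift x) (stdLift y) ≠ 0 := by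
  rwa [ne_eq, ← ofHom_eq_iff (stdLift_ne_zero x) (stdLift_ne_zero y), ofHom_stdLift, ofHom_stdLift]

/-- The cross-ratio of four points of the sphere given by homogeneous coordinates. -/
def crossHom (z a b c : ℂ × ℂ) : ℂ := det2 z a * det2 b c / (det2 z c * det2 b a)

/-- The cross-ratio of four points of the sphere, normalized so that `a, b, c` go to `0, 1, ∞`
(junk value `0` at `z = c`). -/
def crossRatio (z a b c : Sphere) : ℂ :=
  crossHom (stdLift z) (stdLift a) (stdLift b) (stdLift c)

/-- The point whose cross-ratio with `a, b, c` is `w`. -/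
def crossRatioInv (w : ℂ) (a b c : Sphere) : Sphere :=
  ofHom (det2 (stdLift b) (stdLift c) • stdLift a -
    (w * det2 (stdLift b) (stdLift a)) • stdLift c)

variable {z z' a b c : Sphere}

theorem crossRatio_ofHom {z a b c : ℂ × ℂ} (hz : z ≠ 0) (ha : a ≠ 0) (hb : b ≠ 0) (hc : c ≠ 0) :
    crossRatio (ofHom z) (ofHom a) (ofHom b) (ofHom c) = crossHom z a b c := by
  obtain ⟨z', hz', ez⟩ := exists_eq_smul_stdLift hz
  obtain ⟨a', ha', ea⟩ := exists_eq_smul_stdLift ha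
  obtain ⟨b', hb', eb⟩ := exists_eq_smul_stdLift hb
  obtain ⟨c', hc', ec⟩ := exists_eq_smul_stdLift hc
  conv_rhs => rw [ez, ea, eb, ec]
  simp only [crossRatio, crossHom, det2_smul_smul]
  rw [mul_mul_mul_comm, mul_mul_mul_comm (z' * c'),
    show z' * c' * (b' * a') = z' * a' * (b' * c') by ring, mul_div_mul_left _ _ (by simp [*])]

theorem crossRatio_ne_zero (hza : z ≠ a) (hzc : z ≠ c) (hba : b ≠ a) (hbc : b ≠ c) :
    crossRatio z a b c ≠ 0 :=
  div_ne_zero (mul_ne_zero (det2_stdLift_ne_zero hza) (det2_stdLift_ne_zero hbc))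
    (mul_ne_zero (det2_stdLift_ne_zero hzc) (det2_stdLift_ne_zero hba))

theorem crossRatio_self (hba : b ≠ a) (hbc : b ≠ c) : crossRatio b a b c = 1 := by
  rw [crossRatio, crossHom, mul_comm,
    div_self (mul_ne_zero (det2_stdLift_ne_zero hbc) (det2_stdLift_ne_zero hba))]

theorem crossRatioInv_vector_ne_zero (hac : a ≠ c) (hbc : b ≠ c) (w : ℂ) :
    det2 (stdLift b) (stdLift c) • stdLift a -
      (w * det2 (stdLift b) (stdLift a)) • stdLift c ≠ 0 := fun h => by
  have hdet := congrArg (det2 · (stdLift c)) h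
  simp only [det2_smul_sub_smul_left, det2_self, mul_zero, sub_zero] at hdet
  exact mul_ne_zero (det2_stdLift_ne_zero hbc) (det2_stdLift_ne_zero hac)
    (hdet.trans (by simp [det2]))

theorem crossRatioInv_crossRatio (hzc : z ≠ c) (hac : a ≠ c) (hba : b ≠ a) (hbc : b ≠ c) :
    crossRatioInv (crossRatio z a b c) a b c = z := by
  have hzc' := det2_stdLift_ne_zero hzc
  have hba' := det2_stdLift_ne_zero hba
  conv_rhs => rw [← ofHom_stdLift z]
  rw [crossRatioInv, ofHom_eq_iff (crossRatioInv_vector_ne_zero hac hbc _) (stdLift_ne_zero z),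
    det2_smul_sub_smul_left, det2_swap (stdLift z) (stdLift a), det2_swap (stdLift z) (stdLift c),
    crossRatio, crossHom]
  field_simp
  ring

theorem crossRatio_injOn (hac : a ≠ c) (hba : b ≠ a) (hbc : b ≠ c) :
    InjOn (fun z => crossRatio z a b c) {c}ᶜ := fun z hz z' hz' h => by
  rw [← crossRatioInv_crossRatio hz hac hba hbc, show crossRatio z a b c = _ from h,
    crossRatioInv_crossRatio hz' hac hba hbc]

theorem continuous_crossRatioInv (hac : a ≠ c) (hbc : b ≠ c) :
    Continuous fun w => crossRatioInv w a b c :=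
  continuous_iff_continuousAt.2 fun w =>
    (continuousAt_ofHom (crossRatioInv_vector_ne_zero hac hbc w)).comp
      (f := fun w => det2 (stdLift b) (stdLift c) • stdLift a -
        (w * det2 (stdLift b) (stdLift a)) • stdLift c) (by fun_prop)

theorem continuousAt_crossRatio (hzc : z ≠ c) (hba : b ≠ a) :
    ContinuousAt (fun x => crossRatio x a b c) z := by
  obtain ⟨s, hs, hsv⟩ := exists_continuousAt_lift z
  have hzs := hsv.self_of_nhds
  have hden : det2 (s z) (stdLift c) ≠ 0 := by
    rwa [ne_eq, ← ofHom_eq_iff hzs.1 (stdLift_ne_zero c), hzs.2, ofHom_stdLift]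
  have hcont : ContinuousAt (fun x => crossHom (s x) (stdLift a) (stdLift b) (stdLift c)) z :=
    ContinuousAt.div (by unfold det2; fun_prop) (by unfold det2; fun_prop)
      (mul_ne_zero hden (det2_stdLift_ne_zero hba))
  refine hcont.congr ?_
  filter_upwards [hsv] with x hx
  rw [← crossRatio_ofHom hx.1 (stdLift_ne_zero a) (stdLift_ne_zero b) (stdLift_ne_zero c), hx.2,
    ofHom_stdLift, ofHom_stdLift, ofHom_stdLift]

end CrossRatio

/-! ### Sphere-valued functions with disjoint graphs -/

section SphereDifferentiableAt

variable {E E' : Type*} [NormedAddCommGroup E] [NormedSpace ℂ E] [NormedAddCommGroup E']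
  [NormedSpace ℂ E'] {x : E}

/-- Complex differentiability at `x` of a function with values in the Riemann sphere: near `x`, it
has homogeneous coordinates that are differentiable at `x`. -/
def SphereDifferentiableAt (u : E → Sphere) (x : E) : Prop :=
  ∃ v : E → ℂ × ℂ, DifferentiableAt ℂ v x ∧ ∀ᶠ y in 𝓝 x, v y ≠ 0 ∧ ofHom (v y) = u y

theorem SphereDifferentiableAt.continuousAt {u : E → Sphere} (hu : SphereDifferentiableAt u x) :
    ContinuousAt u x := by
  obtain ⟨v, hv, hvu⟩ := hu
  exact ((continuousAt_ofHom hvu.self_of_nhds.1).comp hv.continuousAt).congr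
    (hvu.mono fun y hy => hy.2)

theorem SphereDifferentiableAt.comp {u : E → Sphere} {f : E' → E} {y : E'}
    (hu : SphereDifferentiableAt u (f y)) (hf : DifferentiableAt ℂ f y) :
    SphereDifferentiableAt (fun y => u (f y)) y := by
  obtain ⟨v, hv, hvu⟩ := hu
  exact ⟨v ∘ f, hv.comp y hf, hf.continuousAt.eventually hvu⟩

theorem differentiableAt_crossHom {z a b c : E → ℂ × ℂ} (hz : DifferentiableAt ℂ z x)
    (ha : DifferentiableAt ℂ a x) (hb : DifferentiableAt ℂ b x) (hc : DifferentiableAt ℂ c x)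
    (hzc : det2 (z x) (c x) ≠ 0) (hba : det2 (b x) (a x) ≠ 0) :
    DifferentiableAt ℂ (fun y => crossHom (z y) (a y) (b y) (c y)) x := by
  have hden := mul_ne_zero hzc hba
  unfold crossHom det2 at *
  fun_prop (disch := exact hden)

theorem SphereDifferentiableAt.crossRatio {z a b c : E → Sphere} (hz : SphereDifferentiableAt z x)
    (ha : SphereDifferentiableAt a x) (hb : SphereDifferentiableAt b x)
    (hc : SphereDifferentiableAt c x) (hzc : z x ≠ c x) (hba : b x ≠ a x) :
    DifferentiableAt ℂ (fun y => crossRatio (z y) (a y) (b y) (c y)) x := by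
  obtain ⟨z', hz', hzz'⟩ := hz
  obtain ⟨a', ha', haa'⟩ := ha
  obtain ⟨b', hb', hbb'⟩ := hb
  obtain ⟨c', hc', hcc'⟩ := hc
  refine (differentiableAt_crossHom hz' ha' hb' hc' ?_ ?_).congr_of_eventuallyEq ?_
  · rwa [ne_eq, ← ofHom_eq_iff hzz'.self_of_nhds.1 hcc'.self_of_nhds.1, hzz'.self_of_nhds.2,
      hcc'.self_of_nhds.2]
  · rwa [ne_eq, ← ofHom_eq_iff hbb'.self_of_nhds.1 haa'.self_of_nhds.1, hbb'.self_of_nhds.2,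
      haa'.self_of_nhds.2]
  · filter_upwards [hzz', haa', hbb', hcc'] with y hz ha hb hc
    rw [← crossRatio_ofHom hz.1 ha.1 hb.1 hc.1, hz.2, ha.2, hb.2, hc.2]

end SphereDifferentiableAt

section DisjointSphereGraphs

open Metric

variable {ι : Type*} {L : Filter ι} [L.NeBot] {o : ℂ} {R : ℝ} {u : ι → ℂ → Sphere} {p : Sphere}

theorem exists_tendsto_of_graphsDisjointOrEqOn_of_omits_three
    (hu : ∀ i, ∀ t ∈ ball o R, SphereDifferentiableAt (u i) t)
    (hdisj : GraphsDisjointOrEqOn u (ball o R)) {a b c : ℂ → Sphere}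
    (ha : ∀ t ∈ ball o R, SphereDifferentiableAt a t)
    (hb : ∀ t ∈ ball o R, SphereDifferentiableAt b t)
    (hc : ∀ t ∈ ball o R, SphereDifferentiableAt c t)
    (hac : ∀ t ∈ ball o R, a t ≠ c t) (hba : ∀ t ∈ ball o R, b t ≠ a t)
    (hbc : ∀ t ∈ ball o R, b t ≠ c t) (hua : ∀ i, ∀ t ∈ ball o R, u i t ≠ a t)
    (hub : ∀ i, ∀ t ∈ ball o R, u i t ≠ b t) (huc : ∀ i, ∀ t ∈ ball o R, u i t ≠ c t)
    (hpa : p ≠ a o) (hpc : p ≠ c o) (hlim : Tendsto (fun i => u i o) L (𝓝 p)) {t : ℂ}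
    (ht : t ∈ ball o R) :
    ∃ x, Tendsto (fun i => u i t) L (𝓝 x) := by
  have ho : o ∈ ball o R := mem_ball_self (nonempty_ball.1 ⟨t, ht⟩)
  have hinj : ∀ s ∈ ball o R, InjOn (fun z => crossRatio z (a s) (b s) (c s)) {c s}ᶜ :=
    fun s hs => crossRatio_injOn (hac s hs) (hba s hs) (hbc s hs)
  have hdisj' : GraphsDisjointOrEqOn (fun i s => crossRatio (u i s) (a s) (b s) (c s))
      (ball o R) := fun i j ⟨s, hs, h⟩ r hr => by
    simp only [hdisj i j ⟨s, hs, hinj s hs (huc i s hs) (huc j s hs) h⟩ hr]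
  obtain ⟨w, hw⟩ := exists_tendsto_of_graphsDisjointOrEqOn
    (g := fun i s => crossRatio (u i s) (a s) (b s) (c s))
    (fun i s hs => ((hu i s hs).crossRatio (ha s hs) (hb s hs) (hc s hs) (huc i s hs)
      (hba s hs)).differentiableWithinAt)
    (fun i s hs => crossRatio_ne_zero (hua i s hs) (huc i s hs) (hba s hs) (hbc s hs))
    (fun i s hs h => hub i s hs (hinj s hs (huc i s hs) (hbc s hs)
      (h.trans (crossRatio_self (hba s hs) (hbc s hs)).symm)))
    hdisj' (crossRatio_ne_zero hpa hpc (hba o ho) (hbc o ho))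
    ((continuousAt_crossRatio hpc (hba o ho)).tendsto.comp hlim) ht
  refine ⟨_, (((continuous_crossRatioInv (hac t ht) (hbc t ht)).tendsto w).comp hw).congr
    fun i => ?_⟩
  exact crossRatioInv_crossRatio (huc i t ht) (hac t ht) (hba t ht) (hbc t ht)

theorem exists_tendsto_of_graphsDisjointOrEqOn_of_three_values
    (hu : ∀ i, ∀ t ∈ ball o R, SphereDifferentiableAt (u i) t)
    (hdisj : GraphsDisjointOrEqOn u (ball o R)) {a b c : ι} (hab : u a o ≠ u b o)
    (hac : u a o ≠ u c o) (hbc : u b o ≠ u c o) (hpa : p ≠ u a o) (hpb : p ≠ u b o)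
    (hpc : p ≠ u c o) (hlim : Tendsto (fun i => u i o) L (𝓝 p)) {t : ℂ} (ht : t ∈ ball o R) :
    ∃ x, Tendsto (fun i => u i t) L (𝓝 x) := by
  have ho : o ∈ ball o R := mem_ball_self (nonempty_ball.1 ⟨t, ht⟩)
  set S := {i | u i o ≠ u a o ∧ u i o ≠ u b o ∧ u i o ≠ u c o}
  have hS : S ∈ L := (hlim.eventually_ne hpa).and
    ((hlim.eventually_ne hpb).and (hlim.eventually_ne hpc))
  have hrange : range ((↑) : S → ι) ∈ L := by rwa [Subtype.range_coe]
  have : (comap ((↑) : S → ι) L).NeBot := comap_coe_neBot_of_le_principal (le_principal_iff.2 hS)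
  obtain ⟨x, hx⟩ := exists_tendsto_of_graphsDisjointOrEqOn_of_omits_three
    (L := comap ((↑) : S → ι) L) (u := fun i : S => u i) (fun i => hu i)
    (fun i j => hdisj i j) (hu a) (hu b) (hu c) (fun s hs => hdisj.ne ho hac hs)
    (fun s hs => hdisj.ne ho hab.symm hs) (fun s hs => hdisj.ne ho hbc hs)
    (fun i s hs => hdisj.ne ho i.2.1 hs) (fun i s hs => hdisj.ne ho i.2.2.1 hs)
    (fun i s hs => hdisj.ne ho i.2.2.2 hs) hpa hpc (hlim.comp tendsto_comap) ht
  exact ⟨x, (tendsto_comap'_iff hrange).1 hx⟩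

theorem eventually_eq_of_finite_range_diff {α X : Type*} [TopologicalSpace X] [T1Space X]
    {l : Filter α} {f : α → X} {y : X} (hf : (range f \ {y}).Finite) (hlim : Tendsto f l (𝓝 y)) :
    ∀ᶠ i in l, f i = y := by
  filter_upwards [hlim.eventually (hf.isClosed.isOpen_compl.mem_nhds (by simp))] with i hi
  by_contra hne
  exact hi ⟨mem_range_self i, hne⟩

theorem exists_tendsto_sphere_of_graphsDisjointOrEqOn
    (hu : ∀ i, ∀ t ∈ ball o R, SphereDifferentiableAt (u i) t)
    (hdisj : GraphsDisjointOrEqOn u (ball o R)) (hlim : Tendsto (fun i => u i o) L (𝓝 p)) {t : ℂ}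
    (ht : t ∈ ball o R) :
    ∃ x, Tendsto (fun i => u i t) L (𝓝 x) := by
  by_cases hfin : (range (fun i => u i o) \ {p}).Finite
  · have hev := eventually_eq_of_finite_range_diff hfin hlim
    obtain ⟨j, hj⟩ := hev.exists
    refine ⟨u j t, tendsto_const_nhds.congr' (hev.mono fun i hi => ?_)⟩
    exact hdisj j i ⟨o, mem_ball_self (nonempty_ball.1 ⟨t, ht⟩), hj.trans hi.symm⟩ ht
  · obtain ⟨T, hT, hcard⟩ := Set.Infinite.exists_subset_card_eq hfin 3
    obtain ⟨x, y, z, hxy, hxz, hyz, rfl⟩ := Finset.card_eq_three.1 hcard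
    obtain ⟨⟨a, rfl⟩, ha⟩ := hT (by simp : x ∈ _)
    obtain ⟨⟨b, rfl⟩, hb⟩ := hT (by simp : y ∈ _)
    obtain ⟨⟨c, rfl⟩, hc⟩ := hT (by simp : z ∈ _)
    exact exists_tendsto_of_graphsDisjointOrEqOn_of_three_values hu hdisj hxy hxz hyz
      (Ne.symm ha) (Ne.symm hb) (Ne.symm hc) hlim ht

end DisjointSphereGraphs

/-! ### Rational maps in homogeneous coordinates -/

section HomogeneousForm

/-- The value at `v` of the homogenization in degree `d` of the polynomial `p`. -/
def homogeneousForm (d : ℕ) (p : ℂ[X]) (v : ℂ × ℂ) : ℂ :=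
  ∑ i ∈ Finset.range (d + 1), p.coeff i * (v.1 ^ i * v.2 ^ (d - i))

theorem homogeneousForm_of_snd_ne_zero {d : ℕ} {p : ℂ[X]} (hp : p.natDegree ≤ d) {v : ℂ × ℂ}
    (hv : v.2 ≠ 0) : homogeneousForm d p v = v.2 ^ d * p.eval (v.1 / v.2) := by
  rw [homogeneousForm, Polynomial.eval_eq_sum_range' (Nat.lt_succ_of_le hp), Finset.mul_sum]
  refine Finset.sum_congr rfl fun i hi => ?_
  rw [← Nat.add_sub_cancel' (Finset.mem_range_succ_iff.1 hi), Nat.add_sub_cancel_left, pow_add,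
    div_pow]
  field_simp

theorem homogeneousForm_of_snd_eq_zero (d : ℕ) (p : ℂ[X]) {v : ℂ × ℂ} (hv : v.2 = 0) :
    homogeneousForm d p v = p.coeff d * v.1 ^ d := by
  rw [homogeneousForm, Finset.sum_range_succ, Finset.sum_eq_zero, zero_add, Nat.sub_self, pow_zero,
    mul_one]
  intro i hi
  rw [hv, zero_pow (Nat.sub_ne_zero_of_lt (Finset.mem_range.1 hi)), mul_zero, mul_zero]

theorem ratEval_infty_eq_ofHom {d : ℕ} {p q : ℂ[X]} (hp : p.natDegree ≤ d) (hq : q.natDegree ≤ d)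
    (hpq : p.coeff d ≠ 0 ∨ q.coeff d ≠ 0) : ratEval p q ∞ = ofHom (p.coeff d, q.coeff d) := by
  have hlt : ∀ r : ℂ[X], r.natDegree ≤ d → r.coeff d = 0 → r.degree < d := fun r hr h =>
    (Polynomial.degree_lt_iff_coeff_zero r d).2 fun m hm => by
      rcases hm.eq_or_lt with rfl | hm
      · exact h
      · exact Polynomial.coeff_eq_zero_of_natDegree_lt (hr.trans_lt hm)
  have hdeg : ∀ r : ℂ[X], r.natDegree ≤ d → r.coeff d ≠ 0 → r.degree = d := fun r hr h =>
    (Polynomial.degree_le_of_natDegree_le hr).antisymm (Polynomial.le_degree_of_ne_zero h)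
  have hlead : ∀ r : ℂ[X], r.natDegree ≤ d → r.coeff d ≠ 0 → r.leadingCoeff = r.coeff d :=
    fun r hr h => by
      rw [Polynomial.leadingCoeff, hr.antisymm (Polynomial.le_natDegree_of_ne_zero h)]
  by_cases hqd : q.coeff d = 0
  · simp [ratEval, ofHom, hqd, hdeg p hp (hpq.resolve_right (not_not.2 hqd)), hlt q hq hqd]
  · by_cases hpd : p.coeff d = 0
    · simp [ratEval, ofHom, hqd, hpd, hdeg q hq hqd, hlt p hp hpd, hp]
    · simp [ratEval, ofHom, hqd, hdeg q hq hqd, hdeg p hp hpd, hlead q hq hqd, hlead p hp hpd]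

theorem coeff_max_natDegree_ne_zero {p q : ℂ[X]} (h : IsCoprime p q) :
    p.coeff (max p.natDegree q.natDegree) ≠ 0 ∨ q.coeff (max p.natDegree q.natDegree) ≠ 0 := by
  wlog hle : q.natDegree ≤ p.natDegree generalizing p q
  · rw [max_comm, or_comm]
    exact this h.symm (le_of_not_ge hle)
  rw [max_eq_left hle, Polynomial.coeff_natDegree]
  rcases eq_or_ne p 0 with rfl | hp
  · rw [← hle.antisymm (by simp), Polynomial.coeff_natDegree]
    exact .inr (Polynomial.leadingCoeff_ne_zero.2 (isCoprime_zero_left.1 h).ne_zero)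
  · exact .inl (Polynomial.leadingCoeff_ne_zero.2 hp)

end HomogeneousForm

section HomogeneousLift

/-- The homogeneous self-map of `ℂ²` of degree `d` that covers the rational map `F`. -/
def RatMap.homMap {d : ℕ} (F : RatMap d) (v : ℂ × ℂ) : ℂ × ℂ :=
  (homogeneousForm d F.p v, homogeneousForm d F.q v)

theorem RatMap.homMap_ne_zero_and_ofHom_homMap {d : ℕ} (F : RatMap d) {v : ℂ × ℂ} (hv : v ≠ 0) :
    F.homMap v ≠ 0 ∧ ofHom (F.homMap v) = F.toFun (ofHom v) := by
  have hp : F.p.natDegree ≤ d := (le_max_left _ _).trans F.deg.le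
  have hq : F.q.natDegree ≤ d := (le_max_right _ _).trans F.deg.le
  obtain ⟨r, w, hr, hw, hrw, hFw⟩ : ∃ (r : ℂ) (w : ℂ × ℂ), r ≠ 0 ∧ w ≠ 0 ∧ F.homMap v = r • w ∧
      F.toFun (ofHom v) = ofHom w := by
    by_cases hv₂ : v.2 = 0
    · have hcoeff := F.deg ▸ coeff_max_natDegree_ne_zero F.coprime
      refine ⟨v.1 ^ d, (F.p.coeff d, F.q.coeff d), pow_ne_zero d fun h => hv (Prod.ext h hv₂),
        by simpa [← not_and_or] using hcoeff, ?_, ?_⟩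
      · simp only [homMap, homogeneousForm_of_snd_eq_zero d _ hv₂, Prod.smul_mk, smul_eq_mul,
          mul_comm]
      · rw [ofHom_of_snd_eq_zero hv₂, toFun, ratEval_infty_eq_ofHom hp hq hcoeff]
    · refine ⟨v.2 ^ d, (F.p.eval (v.1 / v.2), F.q.eval (v.1 / v.2)), pow_ne_zero d hv₂,
        fun h => ?_, ?_, ?_⟩
      · obtain ⟨a, b, hab⟩ := F.coprime
        rw [Prod.mk_eq_zero] at h
        simpa [h.1, h.2] using congrArg (Polynomial.eval (v.1 / v.2)) hab
      · simp only [homMap, homogeneousForm_of_snd_ne_zero hp hv₂,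
          homogeneousForm_of_snd_ne_zero hq hv₂, Prod.smul_mk, smul_eq_mul]
      · simp [toFun, ratEval, ofHom, hv₂]
  rw [hrw, hFw]
  exact ⟨smul_ne_zero hr hw, ofHom_smul hr w⟩

variable {T : Type*} [NormedAddCommGroup T] [NormedSpace ℂ T] {g : T → Sphere → Sphere} {t₀ : T}

/-- The self-maps `g t` of the sphere are covered by self-maps of `ℂ² ∖ {0}` which depend in a
continuously differentiable way on the parameter `t`, at `t₀`, and on the point. -/
def HasContDiffLiftAt (g : T → Sphere → Sphere) (t₀ : T) : Prop :=
  ∃ H : T → ℂ × ℂ → ℂ × ℂ, (∀ t v, v ≠ 0 → H t v ≠ 0 ∧ ofHom (H t v) = g t (ofHom v)) ∧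
    ∀ v, ContDiffAt ℂ 1 (fun x : T × ℂ × ℂ => H x.1 x.2) (t₀, v)

theorem RatMap.hasContDiffLiftAt {d : ℕ} {F : T → RatMap d}
    (hp : ∀ i, ContDiffAt ℂ 1 (fun t => (F t).p.coeff i) t₀)
    (hq : ∀ i, ContDiffAt ℂ 1 (fun t => (F t).q.coeff i) t₀) :
    HasContDiffLiftAt (fun t => (F t).toFun) t₀ := by
  refine ⟨fun t => (F t).homMap, fun t v => (F t).homMap_ne_zero_and_ofHom_homMap, fun v => ?_⟩
  have hmon : ∀ i j : ℕ, ContDiffAt ℂ 1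
      (fun x : T × ℂ × ℂ => x.2.1 ^ i * x.2.2 ^ j) (t₀, v) := fun i j => by fun_prop
  exact (ContDiffAt.sum fun i _ => ((hp i).comp (t₀, v) contDiffAt_fst).mul (hmon _ _)).prodMk
    (ContDiffAt.sum fun i _ => ((hq i).comp (t₀, v) contDiffAt_fst).mul (hmon _ _))

theorem HasContDiffLiftAt.iterate (hg : HasContDiffLiftAt g t₀) (m : ℕ) :
    HasContDiffLiftAt (fun t => (g t)^[m]) t₀ := by
  obtain ⟨H, hH, hHd⟩ := hg
  refine ⟨fun t => (H t)^[m], fun t v hv => ?_, fun v => ?_⟩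
  · induction m with
    | zero => exact ⟨hv, rfl⟩
    | succ m ih =>
      simp only [Function.iterate_succ_apply'] at ih ⊢
      rw [← ih.2]
      exact hH t _ ih.1
  · induction m with
    | zero => exact contDiffAt_snd
    | succ m ih =>
      simp only [Function.iterate_succ_apply']
      exact ContDiffAt.comp (t₀, v) (g := fun x : T × ℂ × ℂ => H x.1 x.2) (hHd _)
        (contDiffAt_fst.prodMk ih)

theorem HasContDiffLiftAt.conjInv (hg : HasContDiffLiftAt g t₀) :
    HasContDiffLiftAt (fun t => conjInv (g t)) t₀ := by
  obtain ⟨H, hH, hHd⟩ := hg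
  have hswap : ∀ {v : ℂ × ℂ}, v ≠ 0 → v.swap ≠ 0 := fun hv h => hv (Prod.swap_injective h)
  refine ⟨fun t v => (H t v.swap).swap, fun t v hv => ?_, fun v => ?_⟩
  · obtain ⟨hne, heq⟩ := hH t v.swap (hswap hv)
    exact ⟨hswap hne, by rw [ofHom_swap hne, heq, ofHom_swap hv]; rfl⟩
  · have h := ContDiffAt.comp (t₀, v) (f := fun x : T × ℂ × ℂ => (x.1, x.2.swap)) (hHd v.swap)
      (contDiffAt_fst.prodMk (contDiffAt_snd.snd.prodMk contDiffAt_snd.fst))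
    exact h.snd.prodMk h.fst

end HomogeneousLift

/-! ### Continuation of periodic points -/

section FixedPoints

variable {T : Type*} [NormedAddCommGroup T]

theorem eventuallyEq_of_hasStrictFDerivAt_of_fixed {𝕜 : Type*} [NontriviallyNormedField 𝕜]
    [NormedSpace 𝕜 T] {t₀ : T} {G : T × 𝕜 → 𝕜} {G' : T × 𝕜 →L[𝕜] 𝕜} {x : 𝕜}
    (hG : HasStrictFDerivAt G G' (t₀, x)) (hG' : G' (0, 1) ≠ 1) {a b : T → 𝕜}
    (ha : Tendsto a (𝓝 t₀) (𝓝 x)) (hb : Tendsto b (𝓝 t₀) (𝓝 x))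
    (hfa : ∀ᶠ t in 𝓝 t₀, G (t, a t) = a t) (hfb : ∀ᶠ t in 𝓝 t₀, G (t, b t) = b t) :
    a =ᶠ[𝓝 t₀] b := by
  have hpos : 0 < ‖1 - G' (0, 1)‖ := norm_pos_iff.2 (sub_ne_zero.2 hG'.symm)
  have hlim : Tendsto (fun t => ((t, a t), (t, b t))) (𝓝 t₀) (𝓝 ((t₀, x), (t₀, x))) :=
    (tendsto_id.prodMk_nhds ha).prodMk_nhds (tendsto_id.prodMk_nhds hb)
  filter_upwards [(hG.isLittleO.comp_tendsto hlim).bound (half_pos hpos), hfa, hfb]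
    with t hlo hfa hfb
  have hlin : G' (0, a t - b t) = (a t - b t) * G' (0, 1) := by
    rw [← smul_eq_mul, ← _root_.map_smul, Prod.smul_mk, smul_zero, smul_eq_mul, mul_one]
  simp only [Function.comp_apply, hfa, hfb, Prod.mk_sub_mk, sub_self, hlin, Prod.norm_mk, norm_zero,
    max_eq_right (norm_nonneg _)] at hlo
  rw [← mul_one_sub, norm_mul] at hlo
  by_contra hne
  have : 0 < ‖a t - b t‖ := norm_pos_iff.2 (sub_ne_zero.2 hne)
  nlinarith

/-- The multiplier of the self-map `f` of the sphere at its fixed point `x`, computed in the affine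
chart, or in the chart at `∞` for `x = ∞`. -/
def multiplier (f : Sphere → Sphere) (x : Sphere) : ℂ :=
  if x = ∞ then deriv (fun z : ℂ => toC (conjInv f z)) 0
  else deriv (fun z : ℂ => toC (f z)) (toC x)

theorem multiplier_coe (f : Sphere → Sphere) (z : ℂ) :
    multiplier f z = deriv (fun w : ℂ => toC (f w)) z := by
  simp [multiplier]

theorem multiplier_infty (f : Sphere → Sphere) :
    multiplier f ∞ = multiplier (conjInv f) ((0 : ℂ) : Sphere) := by
  rw [multiplier_coe, multiplier, if_pos rfl]

variable [NormedSpace ℂ T] {t₀ : T} {g : T → Sphere → Sphere} {a b : T → Sphere}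

theorem HasContDiffLiftAt.contDiffAt_toC (hg : HasContDiffLiftAt g t₀) {x : ℂ}
    (hx : g t₀ x ≠ ∞) : ContDiffAt ℂ 1 (fun p : T × ℂ => toC (g p.1 p.2)) (t₀, x) := by
  obtain ⟨H, hH, hHd⟩ := hg
  have hN : ContDiffAt ℂ 1 (fun p : T × ℂ => H p.1 (p.2, 1)) (t₀, x) :=
    ContDiffAt.comp (t₀, x) (f := fun p : T × ℂ => (p.1, (p.2, (1 : ℂ)))) (hHd (x, 1))
      (by fun_prop)
  have hlift : ∀ t (z : ℂ), ofHom (H t (z, 1)) = g t z := fun t z => by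
    rw [(hH t (z, 1) (by simp)).2, ofHom_coe_one]
  have hden : (H t₀ (x, 1)).2 ≠ 0 := fun h => hx (by rw [← hlift, ofHom_of_snd_eq_zero h])
  simp only [← hlift, toC_ofHom]
  exact hN.fst.div hN.snd hden

theorem HasContDiffLiftAt.eventuallyEq_of_fixed_of_ne_infty (hg : HasContDiffLiftAt g t₀)
    (ha : ContinuousAt a t₀) (hb : ContinuousAt b t₀) (hab : a t₀ = b t₀) (hinf : a t₀ ≠ ∞)
    (hfa : ∀ᶠ t in 𝓝 t₀, g t (a t) = a t) (hfb : ∀ᶠ t in 𝓝 t₀, g t (b t) = b t)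
    (hmult : multiplier (g t₀) (a t₀) ≠ 1) : a =ᶠ[𝓝 t₀] b := by
  have hfixed : ∀ c : T → Sphere, ContinuousAt c t₀ → c t₀ ≠ ∞ →
      (∀ᶠ t in 𝓝 t₀, g t (c t) = c t) →
      ∀ᶠ t in 𝓝 t₀, (toC (c t) : Sphere) = c t ∧ toC (g t (toC (c t))) = toC (c t) :=
    fun c hc hc₀ hfc => by
      filter_upwards [hc.eventually_ne hc₀, hfc] with t hne hfix
      rw [coe_toC hne, hfix]
      exact ⟨rfl, rfl⟩
  obtain ⟨x, hx⟩ := OnePoint.ne_infty_iff_exists.1 hinf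
  have hlim : ∀ c : T → Sphere, ContinuousAt c t₀ → c t₀ = x →
      Tendsto (fun t => toC (c t)) (𝓝 t₀) (𝓝 x) := fun c hc hcx => by
    have hcomp : ContinuousAt (fun t => toC (c t)) t₀ :=
      (continuousAt_toC (hcx.trans_ne (coe_ne_infty x))).comp hc
    simpa [hcx] using hcomp.tendsto
  have hstrict := (hg.contDiffAt_toC (x := x)
    (by rw [hx, hfa.self_of_nhds]; exact hinf)).hasStrictFDerivAt one_ne_zero
  have hderiv := hstrict.hasFDerivAt.comp_hasDerivAt x
    ((hasDerivAt_const x t₀).prodMk (hasDerivAt_id x))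
  rw [← hx, multiplier_coe] at hmult
  have hfixa := hfixed a ha hinf hfa
  have hfixb := hfixed b hb (hab ▸ hinf) hfb
  filter_upwards [hfixa, hfixb, eventuallyEq_of_hasStrictFDerivAt_of_fixed hstrict
    (hderiv.deriv.symm.trans_ne hmult) (hlim a ha hx.symm) (hlim b hb (hab.symm.trans hx.symm))
    (hfixa.mono fun t ht => ht.2) (hfixb.mono fun t ht => ht.2)] with t hat hbt heq
  rw [← hat.1, heq, hbt.1]

theorem conjInv_semiconj (f : Sphere → Sphere) : Function.Semiconj sphInv f (conjInv f) :=
  fun x => by simp only [conjInv, Function.comp_apply, sphInv_involutive x]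

theorem HasContDiffLiftAt.eventuallyEq_of_fixed (hg : HasContDiffLiftAt g t₀)
    (ha : ContinuousAt a t₀) (hb : ContinuousAt b t₀) (hab : a t₀ = b t₀)
    (hfa : ∀ᶠ t in 𝓝 t₀, g t (a t) = a t) (hfb : ∀ᶠ t in 𝓝 t₀, g t (b t) = b t)
    (hmult : multiplier (g t₀) (a t₀) ≠ 1) : a =ᶠ[𝓝 t₀] b := by
  by_cases hinf : a t₀ = ∞
  · have hfixed : ∀ c : T → Sphere, (∀ᶠ t in 𝓝 t₀, g t (c t) = c t) →
        ∀ᶠ t in 𝓝 t₀, _root_.conjInv (g t) (sphInv (c t)) = sphInv (c t) := fun c hc =>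
      hc.mono fun t ht => by rw [← conjInv_semiconj, ht]
    rw [hinf, multiplier_infty] at hmult
    have heq := hg.conjInv.eventuallyEq_of_fixed_of_ne_infty (a := sphInv ∘ a) (b := sphInv ∘ b)
      (continuous_sphInv.continuousAt.comp ha) (continuous_sphInv.continuousAt.comp hb)
      (congrArg sphInv hab) (by simp [hinf]) (hfixed a hfa) (hfixed b hfb) (by simpa [hinf])
    exact heq.mono fun t ht => sphInv_involutive.injective ht
  · exact hg.eventuallyEq_of_fixed_of_ne_infty ha hb hab hinf hfa hfb hmult

end FixedPoints

section PeriodicPoints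

/-- No cycle of `f` has multiplier a root of unity: the multiplier of every fixed point of every
iterate of `f` differs from `1`. -/
def NoParabolicCycle (f : Sphere → Sphere) : Prop :=
  ∀ n > 0, ∀ x, f^[n] x = x → multiplier f^[n] x ≠ 1

theorem conjInv_iterate (f : Sphere → Sphere) (n : ℕ) : (conjInv f)^[n] = conjInv f^[n] :=
  funext fun x => by
    change _ = sphInv (f^[n] (sphInv x))
    rw [((conjInv_semiconj f).iterate_right n).eq, sphInv_involutive x]

theorem HypPeriodic.noParabolicCycle {f : Sphere → Sphere} (hf : HypPeriodic f) :
    NoParabolicCycle f := fun n hn x hx hmult => by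
  obtain ⟨hinf, hfin⟩ := hf x ⟨n, hn, hx⟩ n hn hx
  unfold iterC at hinf hfin
  rw [conjInv_iterate] at hinf
  unfold multiplier at hmult
  split_ifs at hmult with h
  · exact hinf h (by rw [hmult, norm_one])
  · exact hfin h (by rw [hmult, norm_one])

theorem WeaklyStable.hypPeriodic {d : ℕ} {F : RatMap d} (h : WeaklyStable F) :
    HypPeriodic F.toFun := by
  obtain ⟨δ, hδ, hF⟩ := h
  exact hF F fun i => by simp [hδ.le]

theorem eqOn_of_isPreconnected_of_eventuallyEq {X Y : Type*} [TopologicalSpace X]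
    [TopologicalSpace Y] [T2Space Y] {s : Set X} (hs : IsOpen s) (hconn : IsPreconnected s)
    {u v : X → Y} (hu : ContinuousOn u s) (hv : ContinuousOn v s)
    (hloc : ∀ x ∈ s, u x = v x → u =ᶠ[𝓝 x] v) {x : X} (hx : x ∈ s) (hxuv : u x = v x) :
    EqOn u v s := by
  have hsub : s ⊆ {x | u =ᶠ[𝓝 x] v} := by
    refine hconn.subset_of_closure_inter_subset isOpen_setOfPred_eventually_nhds
      ⟨x, hx, hloc x hx hxuv⟩ fun y ⟨hyc, hy⟩ => hloc y hy ?_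
    by_contra hne
    exact mem_closure_iff_frequently.1 hyc <|
      (((hu.continuousAt (hs.mem_nhds hy)).tendsto.prodMk_nhds
        (hv.continuousAt (hs.mem_nhds hy))).eventually
          (isClosed_diagonal.isOpen_compl.mem_nhds hne)).mono fun z hz heq => hz heq.self_of_nhds
  exact fun y hy => (hsub hy).self_of_nhds

variable {ι : Type*} {d : ℕ} {F : ℂ → RatMap d} {s : Set ℂ}

theorem graphsDisjointOrEqOn_of_noParabolicCycle (hs : IsOpen s) (hconn : IsPreconnected s)
    (hp : ∀ i, DifferentiableOn ℂ (fun t => (F t).p.coeff i) s)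
    (hq : ∀ i, DifferentiableOn ℂ (fun t => (F t).q.coeff i) s)
    (hF : ∀ t ∈ s, NoParabolicCycle (F t).toFun) {u : ι → ℂ → Sphere}
    (hu : ∀ i, ContinuousOn (u i) s)
    (hper : ∀ i, ∃ m > 0, ∀ t ∈ s, (F t).toFun^[m] (u i t) = u i t) :
    GraphsDisjointOrEqOn u s := fun i j ⟨t, ht, hij⟩ => by
  obtain ⟨m, hm, hmi⟩ := hper i
  obtain ⟨n, hn, hnj⟩ := hper j
  have hi : ∀ t ∈ s, (F t).toFun^[m * n] (u i t) = u i t := fun t ht =>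
    Function.IsPeriodicPt.mul_const (hmi t ht) n
  have hj : ∀ t ∈ s, (F t).toFun^[m * n] (u j t) = u j t := fun t ht =>
    Function.IsPeriodicPt.const_mul (hnj t ht) m
  refine eqOn_of_isPreconnected_of_eventuallyEq hs hconn (hu i) (hu j) (fun t ht hij => ?_) ht hij
  have hst := hs.mem_nhds ht
  have hlift : HasContDiffLiftAt (fun t => (F t).toFun^[m * n]) t :=
    (RatMap.hasContDiffLiftAt (fun k => ((hp k).contDiffOn hs).contDiffAt hst)
      fun k => ((hq k).contDiffOn hs).contDiffAt hst).iterate _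
  exact hlift.eventuallyEq_of_fixed ((hu i).continuousAt hst) ((hu j).continuousAt hst) hij
    (eventually_of_mem hst hi) (eventually_of_mem hst hj)
    (hF t ht _ (Nat.mul_pos hm hn) _ (hi t ht))

end PeriodicPoints

/-! ### The λ-lemma -/

theorem HoloSphere.sphereDifferentiableAt {n : ℕ} {u : (Fin n → ℂ) → Sphere}
    {s : Set (Fin n → ℂ)} (hu : HoloSphere u s) {x : Fin n → ℂ} (hs : s ∈ 𝓝 x) :
    SphereDifferentiableAt u x := by
  obtain ⟨hcont, hdiff⟩ := hu
  obtain ⟨hfin, hinf⟩ := hdiff x (mem_of_mem_nhds hs)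
  by_cases hx : u x = ∞
  · refine ⟨fun y => (1, (toC ∘ sphInv ∘ u) y),
      (differentiableAt_const _).prodMk ((hinf hx).differentiableAt hs), ?_⟩
    filter_upwards [(hcont.continuousAt hs).eventually_ne (hx.trans_ne (infty_ne_coe 0))]
      with y hy
    exact ⟨by simp, ofHom_one_toC_sphInv hy⟩
  · refine ⟨fun y => ((toC ∘ u) y, 1),
      ((hfin hx).differentiableAt hs).prodMk (differentiableAt_const _), ?_⟩
    filter_upwards [(hcont.continuousAt hs).eventually_ne hx] with y hy
    exact ⟨by simp, ofHom_toC_one hy⟩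

section LambdaLemma

open Metric

variable {E : Type*} [NormedAddCommGroup E] [NormedSpace ℂ E] {ι : Type*} {L : Filter ι} [L.NeBot]
  {d : ℕ} {Ω : Set E} {F : E → RatMap d} {φ : ι → E → Sphere}

theorem exists_lineMap_mapsTo_ball {c x : E} {r : ℝ} (hx : x ∈ ball c r) :
    ∃ R > 1, MapsTo (AffineMap.lineMap c x : ℂ → E) (ball 0 R) (ball c r) := by
  have hlim : Tendsto (fun R : ℝ => R * dist c x) (𝓝[>] 1) (𝓝 (1 * dist c x)) :=
    (continuous_mul_const _).continuousAt.tendsto.mono_left nhdsWithin_le_nhds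
  obtain ⟨R, hRr, hR⟩ := ((hlim.eventually_lt_const
    (by rwa [one_mul, ← mem_ball'])).and self_mem_nhdsWithin).exists
  refine ⟨R, hR, fun t ht => ?_⟩
  rw [mem_ball, dist_lineMap_left]
  exact (mul_le_mul_of_nonneg_right (mem_ball_zero_iff.1 ht).le dist_nonneg).trans_lt hRr

theorem exists_tendsto_of_mem_ball {c x : E} {r : ℝ}
    (hp : ∀ i, DifferentiableOn ℂ (fun x => (F x).p.coeff i) (ball c r))
    (hq : ∀ i, DifferentiableOn ℂ (fun x => (F x).q.coeff i) (ball c r))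
    (hF : ∀ x ∈ ball c r, NoParabolicCycle (F x).toFun)
    (hφ : ∀ i, ∀ x ∈ ball c r, SphereDifferentiableAt (φ i) x)
    (hper : ∀ i, ∃ m > 0, ∀ x ∈ ball c r, (F x).toFun^[m] (φ i x) = φ i x) {p : Sphere}
    (hlim : Tendsto (fun i => φ i c) L (𝓝 p)) (hx : x ∈ ball c r) :
    ∃ y, Tendsto (fun i => φ i x) L (𝓝 y) := by
  obtain ⟨R, hR, hmaps⟩ := exists_lineMap_mapsTo_ball hx
  have hline : Differentiable ℂ (AffineMap.lineMap c x : ℂ → E) := fun _ =>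
    AffineMap.hasDerivAt_lineMap.differentiableAt
  have hφ' : ∀ i, ∀ t ∈ ball (0 : ℂ) R,
      SphereDifferentiableAt (fun t : ℂ => φ i (AffineMap.lineMap c x t)) t := fun i t ht =>
    (hφ i _ (hmaps ht)).comp (hline t)
  have hdisj : GraphsDisjointOrEqOn (fun i (t : ℂ) => φ i (AffineMap.lineMap c x t)) (ball 0 R) :=
    graphsDisjointOrEqOn_of_noParabolicCycle isOpen_ball (convex_ball 0 R).isPreconnected
      (fun i => (hp i).comp hline.differentiableOn hmaps)
      (fun i => (hq i).comp hline.differentiableOn hmaps) (fun t ht => hF _ (hmaps ht))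
      (fun i t ht => (hφ' i t ht).continuousAt.continuousWithinAt)
      fun i => (hper i).imp fun m ⟨hm, hper⟩ => ⟨hm, fun t ht => hper _ (hmaps ht)⟩
  simpa using exists_tendsto_sphere_of_graphsDisjointOrEqOn hφ' hdisj (p := p) (t := 1)
    (by simpa using hlim) (by simpa using hR)

theorem lambda_lemma_rational_maps_general (hΩ : IsOpen Ω) (hconn : IsPreconnected Ω)
    (hp : ∀ i, DifferentiableOn ℂ (fun x => (F x).p.coeff i) Ω)
    (hq : ∀ i, DifferentiableOn ℂ (fun x => (F x).q.coeff i) Ω)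
    (hF : ∀ x ∈ Ω, NoParabolicCycle (F x).toFun)
    (hφ : ∀ i, ∀ x ∈ Ω, SphereDifferentiableAt (φ i) x)
    (hper : ∀ i, ∃ m > 0, ∀ x ∈ Ω, (F x).toFun^[m] (φ i x) = φ i x) {x₀ : E} (hx₀ : x₀ ∈ Ω)
    {p : Sphere} (hlim : Tendsto (fun i => φ i x₀) L (𝓝 p)) :
    ∃ Φ : E → Sphere, ∀ x ∈ Ω, Tendsto (fun i => φ i x) L (𝓝 (Φ x)) := by
  suffices hsub : Ω ⊆ {x ∈ Ω | ∃ y, Tendsto (fun i => φ i x) L (𝓝 y)} by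
    choose! Φ hΦ using fun x (hx : x ∈ Ω) => (hsub hx).2
    exact ⟨Φ, hΦ⟩
  have hball : ∀ {c : E} {r : ℝ}, ball c r ⊆ Ω → (∃ y, Tendsto (fun i => φ i c) L (𝓝 y)) →
      ∀ x ∈ ball c r, ∃ y, Tendsto (fun i => φ i x) L (𝓝 y) := fun hsub ⟨_, hy⟩ x hx =>
    exists_tendsto_of_mem_ball (fun i => (hp i).mono hsub) (fun i => (hq i).mono hsub)
      (fun z hz => hF z (hsub hz)) (fun i z hz => hφ i z (hsub hz))
      (fun i => (hper i).imp fun m ⟨hm, h⟩ => ⟨hm, fun z hz => h z (hsub hz)⟩) hy hx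
  refine hconn.subset_of_closure_inter_subset (Metric.isOpen_iff.2 fun x ⟨hx, hlim⟩ => ?_)
    ⟨x₀, hx₀, hx₀, p, hlim⟩ fun x ⟨hxc, hx⟩ => ⟨hx, ?_⟩
  · obtain ⟨r, hr, hsub⟩ := Metric.isOpen_iff.1 hΩ x hx
    exact ⟨r, hr, fun z hz => ⟨hsub hz, hball hsub hlim z hz⟩⟩
  · obtain ⟨r, hr, hsub⟩ := Metric.isOpen_iff.1 hΩ x hx
    obtain ⟨c, hc, hxc⟩ := Metric.mem_closure_iff.1 hxc (r / 2) (half_pos hr)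
    have hsubset : ball c (r / 2) ⊆ ball x r :=
      ball_subset_ball' (by rw [dist_comm]; linarith)
    exact hball (hsubset.trans hsub) hc.2 x (mem_ball.2 hxc)

end LambdaLemma

theorem polydisk_eq_ball (n : ℕ) : polydisk n = Metric.ball 0 1 := by
  ext l
  rw [mem_ball_zero_iff, pi_norm_lt_iff one_pos]
  rfl

/-- **The λ-lemma of Mañé–Sad–Sullivan and Lyubich.**  Let `(f_λ)_{λ ∈ 𝔻ⁿ}` be a
weakly stable holomorphic family of rational maps of degree `d ≥ 2` of the Riemann
sphere.  Then the holomorphic motion is well defined at every point `p₀` of the closure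
`J*₀` of the set of periodic points of `f₀`: for every sequence of periodic points
`pₙ → p₀` of `f₀`, the corresponding holomorphic continuations `λ ↦ pₙ(λ)` converge. -/
theorem lambda_lemma_rational_maps
    {d n : ℕ} (hd : 2 ≤ d)
    (F : (Fin n → ℂ) → RatMap d)
    (hholo : HoloFamily F)
    (hws : ∀ l ∈ polydisk n, WeaklyStable (F l)) :
    ∀ p₀ ∈ closure (Function.periodicPts (F 0).toFun),
      ∀ pn : ℕ → Sphere,
        (∀ k, pn k ∈ Function.periodicPts (F 0).toFun) →
        Tendsto pn atTop (𝓝 p₀) →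
        ∀ φ : ℕ → (Fin n → ℂ) → Sphere,
          (∀ k, φ k 0 = pn k ∧ HoloSphere (φ k) (polydisk n) ∧
            ∀ l ∈ polydisk n, ∀ m : ℕ, 0 < m →
              (F 0).toFun^[m] (pn k) = pn k → (F l).toFun^[m] (φ k l) = φ k l) →
          ∃ Φ : (Fin n → ℂ) → Sphere,
            ∀ l ∈ polydisk n, Tendsto (fun k => φ k l) atTop (𝓝 (Φ l)) := by
  intro p₀ _ pn hpn hlim φ hφ
  have hopen : IsOpen (polydisk n) := polydisk_eq_ball n ▸ Metric.isOpen_ball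
  have hconn : IsPreconnected (polydisk n) :=
    polydisk_eq_ball n ▸ (convex_ball (0 : Fin n → ℂ) 1).isPreconnected
  refine lambda_lemma_rational_maps_general hopen hconn (fun i => (hholo i).1)
    (fun i => (hholo i).2) (fun l hl => (hws l hl).hypPeriodic.noParabolicCycle)
    (fun k l hl => (hφ k).2.1.sphereDifferentiableAt (hopen.mem_nhds hl)) (fun k => ?_)
    (x₀ := 0) (by simp [polydisk]) (hlim.congr fun k => (hφ k).1.symm)
  obtain ⟨m, hm, hmk⟩ := hpn k
  exact ⟨m, hm, fun l hl => (hφ k).2.2 l hl m hm hmk⟩
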